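/- arXiv:0802.2550 — 7 statements merged into one kernel-verified Lean document; each statement's English description precedes it below -/
import Mathlib

section
/- For every integer k ≥ 2, there exists a natural number n with 3·n ≤ 4·⌊log₂ k⌋ + 6 and a topological space on a set of n points having exactly k open sets. (Equivalently, m(k) ≤ (4/3)·⌊log₂ k⌋ + 2.) -/
/-!
# Few points suffice for a topology with `k` open sets

The open sets are taken to be the sets closed under a relation `r`; for a partial order these are
the down-sets ("`i` in the set forces `j` in the set" reads `j < i`). Two one-point extensions are
used. A new point placed above a set `U` increases the number of open sets by the number of open
sets containing `U` (`N_top`; for `U = ∅` it doubles). A new point placed below the complement of a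
set `D` increases it by the number of open sets contained in `D` (`N_bot`).

The induction runs over relations with `k` open sets that carry sets `U₅ ⊆ U₃` and `D` such that
exactly 3 open sets contain `U₃`, exactly 5 contain `U₅`, and exactly 7 are contained in `D`
(`Good n k`). This structure survives

* doubling, at the cost of one point: `k ↦ 2k`;
* placing a point above `U₅`: `k ↦ k + 5`, since both `U₃` and `U₅` can absorb the new point;
* placing a point below the complement of `D`: `k ↦ k + 7`, since points added at the bottom do
  not affect what lies above `U₃` and `U₅`, while points added at the top do not affect `D`;
* two isolated points `y₁, y₂` followed by a point `x` above both and above a set `J` contained in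
  exactly `a` open sets: `k ↦ 4k + a`. Here `U₃` and `U₅` are replaced by the complements of
  `{x, y}` and `{x, y₁, y₂}` (where `y` is one of `y₁`, `y₂`), whatever `J` is; the cases `a = 1`
  and `a = 3` are used.

So `8q + 1`, `8q + 3`, `8q + 5` and `8q + 7` are reached from `q` with four more points, and `2q`
with one more. As `⌊log₂⌋` grows by 3 and by 1 respectively, the bound `3n ≤ 4⌊log₂ k⌋ + 6` is
inherited from `q`. It remains to treat the starting values: `k ∈ {7, …, 13}` and the odd `k < 56`,
which come from seven explicit posets by the same moves, and `k < 7`, where the bound needs no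
extra structure.
-/
namespace FewPoints
variable {α : Type}

/-! ### Sets closed under a relation -/

/-- The subset `s`, given by its indicator function, is closed under the relation `r`. These are the
open sets of the topology attached to `r`; `r` need not be transitive or reflexive. -/
def Closed (r : α → α → Prop) (s : α → Bool) : Prop :=
  ∀ i j, r i j → s i = true → s j = true

/-- The number of `r`-closed sets `s` with `L ≤ s ≤ H`. The bounds need not be closed. -/
noncomputable def N (r : α → α → Prop) (L H : α → Bool) : ℕ :=
  Nat.card {s : α → Bool // Closed r s ∧ L ≤ s ∧ s ≤ H}

/-- The subset of `Option α` that restricts to `L` on `α` and contains `none` iff `b` is `true`. -/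
def cons (b : Bool) (L : α → Bool) : Option α → Bool
  | none => b
  | some i => L i

/-- The unique subset of the empty type, in which nested `cons` expressions end. -/
def nil : Empty → Bool := fun e => e.elim

/-- The unique relation on the empty type. -/
def emptyRel : Empty → Empty → Prop := fun _ _ => False

/-- The extension of `r` by a point `none` lying above the points of `U`: a closed set containing
`none` must contain `U`. -/
def top (r : α → α → Prop) (U : α → Bool) : Option α → Option α → Prop
  | some i, some j => r i j
  | none, some j => U j = true
  | _, none => False

/-- The extension of `r` by a point `none` lying below the points outside `D`: a closed set not
containing `none` must be contained in `D`. -/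
def bot (r : α → α → Prop) (D : α → Bool) : Option α → Option α → Prop
  | some i, some j => r i j
  | some i, none => D i = false
  | none, _ => False

lemma cons_le_cons {a b : Bool} {L H : α → Bool} :
    cons a L ≤ cons b H ↔ a ≤ b ∧ L ≤ H := by
  simp [Pi.le_def, Option.forall, cons]

lemma cons_sup_cons (a b : Bool) (L H : α → Bool) :
    cons a L ⊔ cons b H = cons (a || b) (L ⊔ H) := by
  funext o; cases o <;> rfl

lemma top_eq_cons : (⊤ : Option α → Bool) = cons true ⊤ := by
  funext o; cases o <;> rfl

lemma bot_eq_cons : (⊥ : Option α → Bool) = cons false ⊥ := by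
  funext o; cases o <;> rfl

lemma card_option [Finite α] (P : (Option α → Bool) → Prop) :
    Nat.card {s // P s} =
      Nat.card {s // P (cons false s)} + Nat.card {s // P (cons true s)} := by
  classical
  let f : {s // P (cons false s)} ⊕ {s // P (cons true s)} → {s // P s} :=
    Sum.elim (fun s => ⟨cons false s.1, s.2⟩) (fun s => ⟨cons true s.1, s.2⟩)
  have hf : Function.Bijective f := by
    have inj : ∀ {a b : Bool} {s t : α → Bool}, cons a s = cons b t → a = b ∧ s = t :=
      fun h => ⟨congrFun h none, funext fun i => congrFun h (some i)⟩
    constructor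
    · rintro (⟨s, hs⟩ | ⟨s, hs⟩) (⟨t, ht⟩ | ⟨t, ht⟩) h <;>
        have h := inj (congrArg Subtype.val h) <;> simp_all
    · rintro ⟨s, hs⟩
      have e : s = cons (s none) (fun i => s (some i)) := by funext o; cases o <;> rfl
      cases hb : s none <;> rw [hb] at e
      · exact ⟨Sum.inl ⟨_, e ▸ hs⟩, Subtype.ext e.symm⟩
      · exact ⟨Sum.inr ⟨_, e ▸ hs⟩, Subtype.ext e.symm⟩
  rw [← Nat.card_congr (Equiv.ofBijective f hf), Nat.card_sum]

lemma closed_top {r : α → α → Prop} {U : α → Bool} {b : Bool} {s : α → Bool} :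
    Closed (top r U) (cons b s) ↔ Closed r s ∧ (b = true → U ≤ s) := by
  simp only [Closed, Option.forall, top, cons, Pi.le_def, Bool.le_iff_imp]
  grind

lemma closed_bot {r : α → α → Prop} {D : α → Bool} {b : Bool} {s : α → Bool} :
    Closed (bot r D) (cons b s) ↔ Closed r s ∧ (b = false → s ≤ D) := by
  simp only [Closed, Option.forall, bot, cons, Pi.le_def, Bool.le_iff_imp]
  grind

lemma not_true_le_false : ¬ (true ≤ false) := by decide

lemma N_top [Finite α] (r : α → α → Prop) (U : α → Bool) (l h : Bool) (L H : α → Bool) :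
    N (top r U) (cons l L) (cons h H) =
      (if l then 0 else N r L H) + (if h then N r (L ⊔ U) H else 0) := by
  rw [N, card_option]
  simp only [closed_top, cons_le_cons]
  cases l <;> cases h <;> simp [N, and_assoc, and_comm, and_left_comm, not_true_le_false]

lemma N_bot [Finite α] (r : α → α → Prop) (D : α → Bool) (l h : Bool) (L H : α → Bool) :
    N (bot r D) (cons l L) (cons h H) =
      (if l then 0 else N r L (H ⊓ D)) + (if h then N r L H else 0) := by
  rw [N, card_option]
  simp only [closed_bot, cons_le_cons]
  cases l <;> cases h <;> simp [N, and_assoc, and_comm, and_left_comm, not_true_le_false]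

lemma N_top_top (r : α → α → Prop) : N r ⊤ ⊤ = 1 := by
  have : Closed r ⊤ := fun _ _ _ _ => rfl
  rw [N, Nat.card_eq_one_iff_unique]
  refine ⟨⟨fun a b => Subtype.ext ?_⟩, ⟨⟨⊤, this, le_rfl, le_rfl⟩⟩⟩
  rw [top_le_iff.mp a.2.2.1, top_le_iff.mp b.2.2.1]

lemma N_empty (L H : Empty → Bool) : N emptyRel L H = 1 := by
  rw [Subsingleton.elim L ⊤, Subsingleton.elim H ⊤, N_top_top]

/-! ### Relations with distinguished sets, and the moves preserving them -/

/-- Some relation on `n` points has exactly `k` closed sets and admits sets `U₅ ⊆ U₃` and `D` such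
that 3 closed sets contain `U₃`, 5 contain `U₅`, and 7 are contained in `D`. -/
def Good (n k : ℕ) : Prop :=
  ∃ (α : Type) (_ : Fintype α), Fintype.card α = n ∧
    ∃ (r : α → α → Prop) (U₃ U₅ D : α → Bool), U₅ ≤ U₃ ∧
      N r ⊥ ⊤ = k ∧ N r U₃ ⊤ = 3 ∧ N r U₅ ⊤ = 5 ∧ N r ⊥ D = 7

lemma Good.dbl {n k : ℕ} : Good n k → Good (n + 1) (2 * k) := by
  rintro ⟨α, _, hn, r, U₃, U₅, D, hU, hk, h₃, h₅, hD⟩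
  refine ⟨Option α, inferInstance, by simp [hn], top r ⊥, cons true U₃, cons true U₅,
    cons false D, ?_, ?_, ?_, ?_, ?_⟩
  · simp [cons_le_cons, hU]
  all_goals simp [top_eq_cons, bot_eq_cons, N_top, *]
  omega

lemma Good.add_five {n k : ℕ} : Good n k → Good (n + 1) (k + 5) := by
  rintro ⟨α, _, hn, r, U₃, U₅, D, hU, hk, h₃, h₅, hD⟩
  refine ⟨Option α, inferInstance, by simp [hn], top r U₅, cons true U₃, cons true U₅,
    cons false D, ?_, ?_, ?_, ?_, ?_⟩
  · simp [cons_le_cons, hU]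
  all_goals simp [top_eq_cons, bot_eq_cons, N_top, *]

lemma Good.add_seven {n k : ℕ} : Good n k → Good (n + 1) (k + 7) := by
  rintro ⟨α, _, hn, r, U₃, U₅, D, hU, hk, h₃, h₅, hD⟩
  refine ⟨Option α, inferInstance, by simp [hn], bot r D, cons true U₃, cons true U₅,
    cons false D, ?_, ?_, ?_, ?_, ?_⟩
  · simp [cons_le_cons, hU]
  all_goals simp [top_eq_cons, bot_eq_cons, N_bot, *]
  omega

/-- Two isolated points are added, then a point above both and above `J`. Only `D` is inherited; the
new `U₃` and `U₅` are complements of sets of new points. -/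
lemma quad {α : Type} [Fintype α] {n k a : ℕ} (hn : Fintype.card α = n) (r : α → α → Prop)
    (D J : α → Bool) (hk : N r ⊥ ⊤ = k) (hJ : N r J ⊤ = a) (hD : N r ⊥ D = 7) :
    Good (n + 3) (4 * k + a) := by
  refine ⟨Option (Option (Option α)), inferInstance, by simp [hn],
    top (top (top r ⊥) ⊥) (cons true (cons true J)),
    cons false (cons false (cons true ⊤)), cons false (cons false (cons false ⊤)),
    cons false (cons false (cons false D)), ?_, ?_, ?_, ?_, ?_⟩
  · simp [cons_le_cons]
  all_goals simp [top_eq_cons, bot_eq_cons, cons_sup_cons, N_top, N_top_top, *]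
  omega

lemma Good.quad_one {n k : ℕ} : Good n k → Good (n + 3) (4 * k + 1) := by
  rintro ⟨α, _, hn, r, U₃, U₅, D, hU, hk, h₃, h₅, hD⟩
  exact quad hn r D ⊤ hk (N_top_top r) hD

lemma Good.quad_three {n k : ℕ} : Good n k → Good (n + 3) (4 * k + 3) := by
  rintro ⟨α, _, hn, r, U₃, U₅, D, hU, hk, h₃, h₅, hD⟩
  exact quad hn r D U₃ hk h₃ hD

/-- The sets closed under a relation on `n` points form a topology. -/
lemma topology_of_N {α : Type} [Fintype α] {n k : ℕ} (hn : Fintype.card α = n)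
    (r : α → α → Prop) (hk : N r ⊥ ⊤ = k) :
    ∃ t : TopologicalSpace (Fin n), Nat.card {s : Set (Fin n) // t.IsOpen s} = k := by
  classical
  let e : α ≃ Fin n := Fintype.equivFinOfCardEq hn
  refine ⟨{ IsOpen := fun s => ∀ i j, r i j → e i ∈ s → e j ∈ s
            isOpen_univ := fun _ _ _ _ => trivial
            isOpen_inter := fun s t hs ht i j h hi => ⟨hs i j h hi.1, ht i j h hi.2⟩
            isOpen_sUnion := fun S hS i j h ⟨s, hs, hi⟩ => ⟨s, hs, hS s hs i j h hi⟩ }, ?_⟩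
  rw [← hk, N]
  symm
  refine Nat.card_congr
    { toFun := fun s => ⟨{x | s.1 (e.symm x) = true}, fun i j h => by
        simpa using s.2.1 i j h⟩
      invFun := fun s => ⟨fun i => decide (e i ∈ s.1), fun i j h => by
        simpa using s.2 i j h, bot_le, le_top⟩
      left_inv := fun s => by ext; simp
      right_inv := fun s => by ext; simp }

/-! ### Starting values -/

/-- The poset on the points `0, …, 3` generated by `0 < 2`, `1 < 3` and `2 < 3`. The points are
added in this order, so the innermost entry of a nested `cons` belongs to `0`. -/
lemma good_7 : Good 4 7 := by
  let r₁ := top emptyRel ⊥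
  let r₂ := top r₁ ⊥
  let r₃ := top r₂ (cons false (cons true nil))
  let r₄ := top r₃ (cons true (cons true (cons false nil)))
  refine ⟨_, inferInstance, by simp, r₄,
    cons false (cons false (cons true (cons true nil))),
    cons false (cons false (cons false (cons true nil))),
    cons true (cons true (cons true (cons true nil))), ?_, ?_, ?_, ?_, ?_⟩
  all_goals simp [r₁, r₂, r₃, r₄, top_eq_cons, bot_eq_cons, cons_sup_cons, cons_le_cons,
    N_top, N_empty]

/-- The poset on the points `0, …, 4` generated by `0 < 2`, `1 < 3`, `2 < 3` and `3 < 4`. -/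
lemma good_8 : Good 5 8 := by
  let r₁ := top emptyRel ⊥
  let r₂ := top r₁ ⊥
  let r₃ := top r₂ (cons false (cons true nil))
  let r₄ := top r₃ (cons true (cons true (cons false nil)))
  let r₅ := top r₄ (cons true (cons false (cons false (cons false nil))))
  refine ⟨_, inferInstance, by simp, r₅,
    cons false (cons false (cons true (cons true (cons true nil)))),
    cons false (cons false (cons false (cons true (cons false nil)))),
    cons false (cons true (cons true (cons true (cons true nil)))), ?_, ?_, ?_, ?_, ?_⟩
  all_goals simp [r₁, r₂, r₃, r₄, r₅, top_eq_cons, bot_eq_cons, cons_sup_cons, cons_le_cons,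
    N_top, N_empty]

/-- The poset on the points `0, …, 5` generated by `0 < 2`, `1 < 3`, `2 < 3`, `3 < 4` and `4 < 5`.
-/
lemma good_9 : Good 6 9 := by
  let r₁ := top emptyRel ⊥
  let r₂ := top r₁ ⊥
  let r₃ := top r₂ (cons false (cons true nil))
  let r₄ := top r₃ (cons true (cons true (cons false nil)))
  let r₅ := top r₄ (cons true (cons false (cons false (cons false nil))))
  let r₆ := top r₅ (cons true (cons false (cons false (cons false (cons false nil)))))
  refine ⟨_, inferInstance, by simp, r₆,
    cons false (cons false (cons true (cons true (cons true (cons true nil))))),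
    cons false (cons false (cons false (cons false (cons true (cons true nil))))),
    cons false (cons false (cons true (cons true (cons true (cons true nil))))), ?_, ?_, ?_, ?_, ?_⟩
  all_goals simp [r₁, r₂, r₃, r₄, r₅, r₆, top_eq_cons, bot_eq_cons, cons_sup_cons, cons_le_cons,
    N_top, N_empty]

/-- The poset on the points `0, …, 5` generated by `0 < 2`, `1 < 3`, `2 < 3`, `1 < 4`, `2 < 4`, `3
< 5` and `4 < 5`. -/
lemma good_10 : Good 6 10 := by
  let r₁ := top emptyRel ⊥
  let r₂ := top r₁ ⊥
  let r₃ := top r₂ (cons false (cons true nil))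
  let r₄ := top r₃ (cons true (cons true (cons false nil)))
  let r₅ := top r₄ (cons false (cons true (cons true (cons false nil))))
  let r₆ := top r₅ (cons true (cons true (cons false (cons false (cons false nil)))))
  refine ⟨_, inferInstance, by simp, r₆,
    cons false (cons false (cons true (cons true (cons true (cons true nil))))),
    cons false (cons false (cons false (cons true (cons true (cons true nil))))),
    cons false (cons false (cons true (cons true (cons true (cons true nil))))), ?_, ?_, ?_, ?_, ?_⟩
  all_goals simp [r₁, r₂, r₃, r₄, r₅, r₆, top_eq_cons, bot_eq_cons, cons_sup_cons, cons_le_cons,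
    N_top, N_empty]

/-- The poset on the points `0, …, 5` generated by `0 < 2`, `0 < 3`, `1 < 3`, `1 < 4`, `2 < 4`, `3
< 5` and `4 < 5`. -/
lemma good_11 : Good 6 11 := by
  let r₁ := top emptyRel ⊥
  let r₂ := top r₁ ⊥
  let r₃ := top r₂ (cons false (cons true nil))
  let r₄ := top r₃ (cons false (cons true (cons true nil)))
  let r₅ := top r₄ (cons false (cons true (cons true (cons false nil))))
  let r₆ := top r₅ (cons true (cons true (cons false (cons false (cons false nil)))))
  refine ⟨_, inferInstance, by simp, r₆,
    cons false (cons false (cons true (cons true (cons true (cons true nil))))),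
    cons false (cons false (cons false (cons true (cons true (cons true nil))))),
    cons false (cons true (cons false (cons true (cons true (cons true nil))))), ?_, ?_, ?_, ?_, ?_⟩
  all_goals simp [r₁, r₂, r₃, r₄, r₅, r₆, top_eq_cons, bot_eq_cons, cons_sup_cons, cons_le_cons,
    N_top, N_empty]

/-- The poset on the points `0, …, 6` generated by `0 < 2`, `0 < 3`, `1 < 5`, `2 < 5`, `3 < 6`, `4
< 6` and `5 < 6`. -/
lemma good_25 : Good 7 25 := by
  let r₁ := top emptyRel ⊥
  let r₂ := top r₁ ⊥
  let r₃ := top r₂ (cons false (cons true nil))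
  let r₄ := top r₃ (cons false (cons false (cons true nil)))
  let r₅ := top r₄ ⊥
  let r₆ := top r₅ (cons false (cons false (cons true (cons true (cons false nil)))))
  let r₇ := top r₆ (cons true (cons true (cons true (cons false (cons false (cons false nil))))))
  refine ⟨_, inferInstance, by simp, r₇,
    cons false (cons false (cons true (cons true (cons true (cons true (cons true nil)))))),
    cons false (cons false (cons false (cons true (cons true (cons true (cons true nil)))))),
    cons false (cons true (cons false (cons false (cons true (cons true (cons true nil)))))), ?_, ?_, ?_, ?_, ?_⟩
  all_goals simp [r₁, r₂, r₃, r₄, r₅, r₆, r₇, top_eq_cons, bot_eq_cons, cons_sup_cons, cons_le_cons,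
    N_top, N_empty]

/-- The poset on the points `0, …, 6` generated by `0 < 1`, `1 < 2`, `0 < 4`, `1 < 5`, `3 < 6` and
`4 < 6`. -/
lemma good_27 : Good 7 27 := by
  let r₁ := top emptyRel ⊥
  let r₂ := top r₁ (cons true nil)
  let r₃ := top r₂ (cons true (cons false nil))
  let r₄ := top r₃ ⊥
  let r₅ := top r₄ (cons false (cons false (cons false (cons true nil))))
  let r₆ := top r₅ (cons false (cons false (cons false (cons true (cons false nil)))))
  let r₇ := top r₆ (cons false (cons true (cons true (cons false (cons false (cons false nil))))))
  refine ⟨_, inferInstance, by simp, r₇,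
    cons false (cons true (cons false (cons true (cons true (cons true (cons true nil)))))),
    cons false (cons true (cons false (cons false (cons true (cons true (cons true nil)))))),
    cons false (cons false (cons true (cons false (cons true (cons true (cons true nil)))))), ?_, ?_, ?_, ?_, ?_⟩
  all_goals simp [r₁, r₂, r₃, r₄, r₅, r₆, r₇, top_eq_cons, bot_eq_cons, cons_sup_cons, cons_le_cons,
    N_top, N_empty]

/-- `k` is reached within the required number of points, with the structure needed to continue. -/
def Reached (k : ℕ) : Prop :=
  ∃ n, 3 * n ≤ 4 * Nat.log 2 k + 6 ∧ Good n k

lemma Good.reached {n k l : ℕ} (h : Good n k) (hl : 2 ^ l ≤ k) (hn : 3 * n ≤ 4 * l + 6) :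
    Reached k := by
  have : l ≤ Nat.log 2 k := Nat.le_log_of_pow_le one_lt_two hl
  exact ⟨n, by omega, h⟩

/-- The starting values of the induction: even `k < 14` and odd `k < 56`. -/
lemma reached_small {k : ℕ} (h₇ : 7 ≤ k) (hk : k < 14 ∨ k < 56 ∧ k % 2 = 1) : Reached k := by
  have h₅₆ : k < 56 := by omega
  interval_cases k
  · exact good_7.reached (l := 2) (by norm_num) (by norm_num)
  · exact good_8.reached (l := 3) (by norm_num) (by norm_num)
  · exact good_9.reached (l := 3) (by norm_num) (by norm_num)
  · exact good_10.reached (l := 3) (by norm_num) (by norm_num)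
  · exact good_11.reached (l := 3) (by norm_num) (by norm_num)
  · exact good_7.add_five.reached (l := 3) (by norm_num) (by norm_num)
  · exact good_8.add_five.reached (l := 3) (by norm_num) (by norm_num)
  · omega
  · exact good_8.add_seven.reached (l := 3) (by norm_num) (by norm_num)
  · omega
  · exact good_7.add_five.add_five.reached (l := 4) (by norm_num) (by norm_num)
  · omega
  · exact good_7.dbl.add_five.reached (l := 4) (by norm_num) (by norm_num)
  · omega
  · exact good_7.dbl.add_seven.reached (l := 4) (by norm_num) (by norm_num)
  · omega
  · exact good_8.dbl.add_seven.reached (l := 4) (by norm_num) (by norm_num)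
  · omega
  · exact good_25.reached (l := 4) (by norm_num) (by norm_num)
  · omega
  · exact good_27.reached (l := 4) (by norm_num) (by norm_num)
  · omega
  · exact good_7.quad_one.reached (l := 4) (by norm_num) (by norm_num)
  · omega
  · exact good_7.quad_three.reached (l := 4) (by norm_num) (by norm_num)
  · omega
  · exact good_7.dbl.dbl.add_five.reached (l := 5) (by norm_num) (by norm_num)
  · omega
  · exact good_7.dbl.dbl.add_seven.reached (l := 5) (by norm_num) (by norm_num)
  · omega
  · exact good_8.add_seven.dbl.add_seven.reached (l := 5) (by norm_num) (by norm_num)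
  · omega
  · exact good_8.dbl.dbl.add_seven.reached (l := 5) (by norm_num) (by norm_num)
  · omega
  · exact good_7.add_five.add_five.dbl.add_seven.reached (l := 5) (by norm_num) (by norm_num)
  · omega
  · exact good_7.dbl.add_five.dbl.add_five.reached (l := 5) (by norm_num) (by norm_num)
  · omega
  · exact good_7.dbl.add_five.dbl.add_seven.reached (l := 5) (by norm_num) (by norm_num)
  · omega
  · exact good_7.dbl.add_seven.dbl.add_five.reached (l := 5) (by norm_num) (by norm_num)
  · omega
  · exact good_7.add_five.quad_one.reached (l := 5) (by norm_num) (by norm_num)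
  · omega
  · exact good_7.add_five.quad_three.reached (l := 5) (by norm_num) (by norm_num)
  · omega
  · exact good_7.add_five.dbl.dbl.add_five.reached (l := 5) (by norm_num) (by norm_num)
  · omega
  · exact good_7.add_five.dbl.dbl.add_seven.reached (l := 5) (by norm_num) (by norm_num)

/-! ### The induction -/

lemma log_ge {q k j : ℕ} (hq : 7 ≤ q) (h : 2 ^ j * q ≤ k) : Nat.log 2 q + j ≤ Nat.log 2 k := by
  apply Nat.le_log_of_pow_le one_lt_two
  calc 2 ^ (Nat.log 2 q + j) = 2 ^ j * 2 ^ Nat.log 2 q := by rw [pow_add, mul_comm]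
    _ ≤ 2 ^ j * q := Nat.mul_le_mul_left _ (Nat.pow_log_le_self 2 (by omega))
    _ ≤ k := h

lemma reached (k : ℕ) (hk : 7 ≤ k) : Reached k := by
  induction k using Nat.strong_induction_on with
  | _ k ih =>
    by_cases hs : k < 14 ∨ k < 56 ∧ k % 2 = 1
    · exact reached_small hk hs
    by_cases hev : k % 2 = 0
    · obtain ⟨n, hn, hg⟩ := ih (k / 2) (by omega) (by omega)
      have hl := log_ge (q := k / 2) (k := k) (j := 1) (by omega) (by omega)
      have e : 2 * (k / 2) = k := by omega
      exact ⟨n + 1, by omega, e ▸ hg.dbl⟩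
    · obtain ⟨n, hn, hg⟩ := ih (k / 8) (by omega) (by omega)
      have hl := log_ge (q := k / 8) (k := k) (j := 3) (by omega) (by omega)
      refine ⟨n + 4, by omega, ?_⟩
      have hr : k % 8 = 1 ∨ k % 8 = 3 ∨ k % 8 = 5 ∨ k % 8 = 7 := by omega
      rcases hr with hr | hr | hr | hr
      · have e : 4 * (2 * (k / 8)) + 1 = k := by omega
        exact e ▸ hg.dbl.quad_one
      · have e : 4 * (2 * (k / 8)) + 3 = k := by omega
        exact e ▸ hg.dbl.quad_three
      · have e : 2 * (2 * (2 * (k / 8))) + 5 = k := by omega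
        exact e ▸ hg.dbl.dbl.dbl.add_five
      · have e : 2 * (2 * (2 * (k / 8))) + 7 = k := by omega
        exact e ▸ hg.dbl.dbl.dbl.add_seven

/-- The values below 7, where too few sets are available for the structure in `Good`. -/
lemma tiny {k : ℕ} (h₂ : 2 ≤ k) (h₇ : k < 7) :
    ∃ n, 3 * n ≤ 4 * Nat.log 2 k + 6 ∧
      ∃ t : TopologicalSpace (Fin n), Nat.card {s : Set (Fin n) // t.IsOpen s} = k := by
  have key {n k l : ℕ} (hl : 2 ^ l ≤ k) (hn : 3 * n ≤ 4 * l + 6) {α : Type} [Fintype α]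
      (hα : Fintype.card α = n) (r : α → α → Prop) (hr : N r ⊥ ⊤ = k) :
      ∃ n, 3 * n ≤ 4 * Nat.log 2 k + 6 ∧
        ∃ t : TopologicalSpace (Fin n), Nat.card {s : Set (Fin n) // t.IsOpen s} = k := by
    have : l ≤ Nat.log 2 k := Nat.le_log_of_pow_le one_lt_two hl
    exact ⟨n, by omega, topology_of_N hα r hr⟩
  interval_cases k
  · exact key (n := 1) (l := 1) (by norm_num) (by norm_num) (by simp) (top emptyRel ⊥)
      (by simp [top_eq_cons, bot_eq_cons, cons_sup_cons, N_top, N_empty])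
  · exact key (n := 2) (l := 1) (by norm_num) (by norm_num) (by simp) (top (top emptyRel ⊥) ⊤)
      (by simp [top_eq_cons, bot_eq_cons, cons_sup_cons, N_top, N_empty])
  · exact key (n := 2) (l := 2) (by norm_num) (by norm_num) (by simp) (top (top emptyRel ⊥) ⊥)
      (by simp [top_eq_cons, bot_eq_cons, cons_sup_cons, N_top, N_empty])
  · exact key (n := 3) (l := 2) (by norm_num) (by norm_num) (by simp) (top (top (top emptyRel ⊥) ⊥) ⊤)
      (by simp [top_eq_cons, bot_eq_cons, cons_sup_cons, N_top, N_empty])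
  · exact key (n := 3) (l := 2) (by norm_num) (by norm_num) (by simp) (top (top (top emptyRel ⊥) ⊤) ⊥)
      (by simp [top_eq_cons, bot_eq_cons, cons_sup_cons, N_top, N_empty])

end FewPoints

/-- For every integer `k ≥ 2`, there exists a natural number `n` with
`3 * n ≤ 4 * ⌊log₂ k⌋ + 6` and a topology on a set of `n` points having
exactly `k` open sets. -/
theorem m_le_four_thirds_log (k : ℕ) (hk : 2 ≤ k) :
    ∃ n : ℕ, 3 * n ≤ 4 * Nat.log 2 k + 6 ∧
      ∃ t : TopologicalSpace (Fin n), Nat.card {s : Set (Fin n) // t.IsOpen s} = k := by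
  rcases lt_or_ge k 7 with h | h
  · exact FewPoints.tiny hk h
  · obtain ⟨n, hn, α, _, hα, r, _, _, _, _, hr, _⟩ := FewPoints.reached k h
    exact ⟨n, hn, FewPoints.topology_of_N hα r hr⟩
end

section
/- For all integers n ≥ 2 and k with 2 ≤ k and k⁴ ≤ 2^{3(n−2)}, there exists a topological space on a set of n points having exactly k open sets. (Equivalently, T(n,k) > 0 for all k in [2, 2^{3(n−2)/4}], i.e., f(n) > 2^{3(n−2)/4}.) -/
/-!
Topologies are built one point at a time. Given a topology on `α` and a set `D`, a new point can be
added so that its open neighbourhoods are exactly the open sets containing `D` (`addPoint`); the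
number of open sets then grows by the number of old open sets that contain `D`. Starting with a
space that has `q` open sets, adding `j` isolated points (`D = ∅`) and then a few points lying above
the whole starting space, above some of the isolated points and above some of each other yields
`2 ^ j * q + s` open sets, where `s` is determined by the chosen sets `D`. If `m` points are added on
top of the `j` isolated ones and `3 * (j + m) ≤ 4 * j`, the bound `k ^ 4 ≤ 2 ^ (3 * (n - 2))` passes
from `k = 2 ^ j * q + s` with `n` points to `q` with `n - (j + m)` points. Strong induction on `k`
therefore works as soon as every `k` is congruent modulo some `2 ^ j` to the offset `s < 2 ^ j` of
such an extension.

The table `residueTree` provides a finite covering of all residue classes of this kind: it is a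
binary tree reading the binary digits of `k` from the least significant one, to depth at most `15`,
and every leaf holds an extension for its class `r` modulo `2 ^ j`. The leaf also holds an explicit
construction of a space with `r` open sets, which covers the case `q = 0`. The number of open sets
of an encoded construction is computed by `openCount`, so that the validity of the table is a finite
computation (`check_residueTree`).
-/

/-! ### Counting functions and the table format -/

/-- A list `w` encodes points added successively to a starting space, the head being the last one.
An entry is a bit mask naming the set `D` of earlier points that every neighbourhood of the new point
must contain: bit `i` refers to the `i`-th entry after it, and the bit just beyond the end of the
list to the whole starting space. If the starting space has `q` open sets, `openCount q w D` is the
number of open sets of the resulting space that contain the set with mask `D` (masks of subsets of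
the resulting space are read relative to `w` in the same manner). The separate cases for `D = 0` and
`d = 0` only serve fast evaluation; the recursion is `openCount_cons`. -/
def openCount (q : ℕ) : List ℕ → ℕ → ℕ
  | [], D => bif Nat.beq (D % 2) 1 then 1 else q
  | d :: w, 0 =>
    bif Nat.beq d 0 then 2 * openCount q w 0 else openCount q w 0 + openCount q w d
  | d :: w, n + 1 =>
    bif Nat.beq ((n + 1) % 2) 1 then openCount q w ((n + 1) / 2 ||| d)
    else bif Nat.beq d 0 then 2 * openCount q w ((n + 1) / 2)
    else openCount q w ((n + 1) / 2) + openCount q w ((n + 1) / 2 ||| d)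

/-- The extension by `j` isolated points followed by points with the masks `ys`. -/
def extension (j : ℕ) (ys : List ℕ) : List ℕ := ys ++ List.replicate j 0

/-- The number of open sets of the space obtained from the empty space by successive extensions,
the head of the list being the last one. -/
def towerCount : List (ℕ × List ℕ) → ℕ
  | [] => 1
  | (j, ys) :: b => openCount (towerCount b) (extension j ys) 0

/-- The number of points of the space described in `towerCount`. -/
def towerSize : List (ℕ × List ℕ) → ℕ
  | [] => 0
  | (j, ys) :: b => towerSize b + (extension j ys).length

/-- A covering of the residue class `r` modulo `2 ^ j`. A leaf contains the masks `ys` of an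
extension taking `q` open sets to `2 ^ j * q + r`, and a tower `b` with exactly `r` open sets (unused
for `r < 2`). A node splits the class into the classes of `r` and `r + 2 ^ j` modulo
`2 ^ (j + 1)`. -/
inductive ResidueTree
  | leaf (ys : List ℕ) (b : List (ℕ × List ℕ))
  | node (l r : ResidueTree)

/-- Validity of a covering of the class `r` modulo `2 ^ j`: the counts are right, and the numbers of
points are small enough for the induction. -/
def ResidueTree.check : ResidueTree → ℕ → ℕ → Bool
  | leaf ys b, j, r =>
    Nat.ble 1 j && Nat.ble (3 * (extension j ys).length) (4 * j) &&
    Nat.beq (openCount 0 (extension j ys) 0) r &&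
    Nat.beq (openCount 1 (extension j ys) 0) (r + 2 ^ j) &&
    (Nat.ble r 1 || (Nat.beq (towerCount b) r &&
      Nat.ble (2 ^ (3 * (towerSize b - 3)) + 1) (r ^ 4)))
  | node t₀ t₁, j, r => t₀.check (j + 1) r && t₁.check (j + 1) (r + 2 ^ j)

/-! ### The table -/

set_option maxRecDepth 100000 in
/-- A covering of all natural numbers. -/
def residueTree : ResidueTree :=
  (.node (.leaf [] []) (.node (.node (.leaf [15] []) (.node (.node (.node
  (.leaf [190, 111] [(2, [7])]) (.node (.leaf [318, 224] [(5, [127, 60])]) (.node (.node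
  (.leaf [3068, 1566, 771] [(6, [511, 249, 96])])
  (.leaf [2076, 2035, 520] [(8, [1532, 782, 385])])) (.node
  (.leaf [3068, 1542, 772] [(7, [764, 390, 192])]) (.node (.node
  (.leaf [8316, 5056, 3585] [(8, [1036, 1017, 260])]) (.node
  (.leaf [40952, 20604, 12736, 6400] [(10, [16383, 4348, 2182, 1153])]) (.node
  (.leaf [69624, 47116, 25610, 12292] [(11, [18424, 11268, 6716, 3072])])
  (.leaf [66552, 34304, 31747, 8193] [(12, [131071, 36856, 30724, 8220, 4098])])))) (.node
  (.node (.leaf [49144, 24700, 12736, 6432] [(9, [8191, 2172, 1090, 576])])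
  (.leaf [34808, 23556, 12812, 6144] [(11, [18424, 11324, 6658, 3074])])) (.node
  (.leaf [36856, 22556, 13328, 6160] [(10, [9208, 4612, 3597, 1280])])
  (.leaf [32888, 32719, 8288, 4160] [(11, [65535, 18424, 15372, 4106, 2050])])))))))) (.node
  (.leaf [158, 112] [(4, [63, 28])]) (.node (.node (.node
  (.leaf [4092, 1086, 992] [(5, [255, 121, 48])])
  (.leaf [2108, 2023, 528] [(8, [2047, 542, 305])])) (.node
  (.leaf [3068, 1550, 776] [(7, [1023, 270, 152])]) (.node (.node (.node
  (.leaf [17404, 11782, 6916] [(8, [1052, 1011, 264])])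
  (.leaf [40952, 28924, 10626, 6144] [(11, [32767, 9212, 5638, 2061])])) (.node
  (.leaf [49144, 24604, 12304, 6128] [(10, [16383, 4604, 2818, 1030])])
  (.leaf [33272, 24320, 12672, 6144] [(11, [20472, 14460, 5312, 3072])]))) (.node (.node
  (.leaf [49144, 24700, 12736, 6401] [(9, [5112, 3588, 1310, 768])])
  (.leaf [36856, 22532, 13372, 6144] [(11, [32767, 8444, 4482, 2368])])) (.node
  (.leaf [36856, 22588, 13314, 6146] [(10, [9208, 5644, 3330, 1536])]) (.node
  (.leaf [73720, 45084, 26640, 12304] [(11, [18424, 9220, 7181, 2560])]) (.node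
  (.leaf [133112, 72716, 45058, 26624] [(12, [131071, 34808, 31748, 8708, 4097])]) (.node
  (.leaf [1048575, 266232, 145420, 90120, 32773] [(13, [262143, 66552, 36352, 22530, 8193])])
  (.leaf [1048575, 266232, 145412, 90112, 32770] [(7, [1023, 270, 152]), (7, [572, 352, 192])])))))))))
  (.node (.node (.leaf [3068, 1550, 777] [(6, [380, 198, 96])]) (.node (.node
  (.leaf [8700, 5894, 3456] [(8, [1532, 774, 388])]) (.node
  (.leaf [65528, 16892, 9986, 7168] [(10, [16383, 4604, 2822, 1029])]) (.node
  (.leaf [73720, 45060, 26750, 12290] [(11, [18424, 11276, 6682, 3072])]) (.node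
  (.leaf [133112, 97292, 50688, 24580] [(12, [131071, 34808, 31744, 8704, 4103])]) (.node
  (.leaf [266232, 194564, 101376, 49153] [(13, [262143, 69624, 63500, 17408, 8204])])
  (.leaf [960412, 266288, 161505, 69680, 32776] [(8, [1532, 774, 388]), (6, [268, 152, 112])]))))))
  (.node (.node (.leaf [16636, 10112, 7169] [(9, [8191, 2300, 1410, 514])])
  (.leaf [36856, 22532, 13374, 6144] [(11, [32760, 8444, 4992, 3584])])) (.node
  (.leaf [40952, 28676, 10364, 6208] [(10, [9208, 5636, 3340, 1536])]) (.node
  (.leaf [66552, 48644, 25344, 12290] [(11, [18424, 11264, 6686, 3072])]) (.node (.node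
  (.leaf [294904, 180252, 106512, 49264] [(12, [131071, 34808, 31748, 8704, 4102])])
  (.leaf [1048575, 266232, 145420, 90120, 32776] [(14, [524287, 139256, 126980, 34828, 16394])]))
  (.node
  (.leaf [545280, 282856, 132136, 129441, 50192] [(10, [9208, 5636, 3340, 1536]), (3, [22, 12])])
  (.leaf [604373, 262176, 135440, 73746, 59443] [(4, [63, 19]), (10, [9208, 5632, 3335, 1025])]))))))))
  (.node (.node (.leaf [4348, 2946, 1728] [(7, [524, 505, 132])]) (.node
  (.leaf [8316, 5056, 3584] [(9, [8191, 2300, 1410, 515])]) (.node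
  (.leaf [36856, 22532, 13374, 6146] [(10, [10232, 7228, 2656, 1536])])
  (.leaf [33784, 17920, 15367, 4097] [(11, [16888, 12036, 6146, 3073])])))) (.node (.node (.node
  (.leaf [65528, 16636, 10114, 7233] [(8, [4095, 1148, 704, 257])])
  (.leaf [36856, 22556, 13362, 6144] [(11, [32767, 8444, 4486, 2369])])) (.node
  (.leaf [49144, 24700, 12736, 6400] [(10, [16383, 4220, 2242, 1184])]) (.node
  (.leaf [73720, 45068, 26648, 12304] [(11, [18424, 11276, 6680, 3072])]) (.node
  (.leaf [135160, 96268, 49162, 24584] [(12, [131071, 33272, 18188, 11266, 4097])]) (.node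
  (.leaf [1048575, 278520, 155652, 86016, 32830] [(13, [262143, 81912, 57372, 16432, 8224])])
  (.leaf [871968, 262176, 133696, 82064, 36105] [(4, [63, 19]), (10, [8696, 7936, 2944, 1536])]))))))
  (.node (.node (.leaf [40952, 28684, 10362, 6209] [(9, [4600, 2820, 1664, 769])])
  (.leaf [33784, 24064, 12302, 6144] [(11, [32767, 8252, 4320, 2432])])) (.node
  (.leaf [36856, 22556, 13312, 6168] [(10, [9208, 5632, 3342, 1536])]) (.node
  (.leaf [67576, 48132, 24582, 12292] [(11, [16888, 8960, 7683, 2049])]) (.node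
  (.leaf [131192, 66496, 40448, 28672] [(12, [131071, 40952, 28684, 8216, 4112])]) (.node
  (.leaf [1048575, 266232, 145412, 90116, 32780] [(10, [9208, 5632, 3342, 1536]), (3, [22, 12])])
  (.leaf [1044413, 353304, 197648, 73761, 32784] [(7, [524, 505, 132]), (7, [572, 352, 192])]))))))))))))
  (.node (.node (.leaf [158, 113] [(3, [31, 12])]) (.node (.node (.node
  (.leaf [4092, 1150, 961] [(5, [78, 56])]) (.leaf [2300, 1923, 576] [(8, [2047, 574, 291])]))
  (.node (.leaf [2300, 1410, 833] [(7, [1023, 286, 145])]) (.node (.node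
  (.leaf [9212, 5638, 3332] [(8, [1148, 704, 416])]) (.node
  (.leaf [49144, 25084, 14080, 6145] [(10, [16383, 5116, 2566, 1036])]) (.node
  (.leaf [81912, 57468, 20672, 12289] [(11, [20472, 14588, 5126, 3072])])
  (.leaf [69624, 38916, 20486, 12288] [(12, [131071, 34808, 31748, 8710, 4352])])))) (.node
  (.node (.leaf [49144, 25084, 12550, 6401] [(9, [5112, 3588, 1340, 768])])
  (.leaf [40952, 28732, 10336, 6144] [(11, [32767, 8316, 4544, 2305])])) (.node
  (.leaf [40952, 28732, 10274, 6160] [(10, [10232, 7292, 2562, 1536])])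
  (.leaf [34808, 23552, 12294, 6144] [(11, [18428, 15365, 4608, 2054])])))))) (.node (.node
  (.leaf [3068, 1550, 792] [(6, [511, 142, 72])]) (.node
  (.leaf [4604, 2822, 1664] [(8, [1084, 614, 448])]) (.node
  (.leaf [8444, 4992, 3584] [(9, [8191, 2556, 1286, 516])]) (.node
  (.leaf [40952, 28796, 10306, 6145] [(10, [10232, 7180, 2584, 1536])])
  (.leaf [34808, 19456, 10242, 6146] [(11, [20472, 14396, 5152, 3072])]))))) (.node
  (.leaf [2300, 1410, 832] [(7, [2047, 636, 326, 129])]) (.node (.node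
  (.leaf [8316, 5056, 3616] [(8, [4095, 1276, 642, 258])]) (.node
  (.leaf [40952, 28796, 10310, 6145] [(10, [12280, 6268, 3138, 1600])])
  (.leaf [34808, 23556, 12300, 6144] [(11, [32767, 8316, 4544, 2304])]))) (.node (.node
  (.leaf [40952, 28732, 10464, 6192] [(9, [5112, 3644, 1282, 768])])
  (.leaf [34808, 23556, 12302, 6144] [(11, [20472, 14396, 5154, 3073])])) (.node
  (.leaf [40952, 28672, 10270, 6192] [(10, [10232, 7196, 2576, 1536])]) (.node
  (.leaf [69624, 47116, 24600, 12289] [(11, [17400, 11776, 6150, 3072])])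
  (.leaf [69624, 38924, 20488, 12288] [(12, [131071, 49144, 24604, 8240, 4128])]))))))))) (.node
  (.node (.node (.node (.leaf [4092, 1150, 963] [(4, [127, 57, 24])])
  (.leaf [2300, 1927, 576] [(8, [2047, 574, 295])])) (.node
  (.leaf [3068, 1566, 784] [(7, [1023, 286, 147])]) (.node (.node
  (.leaf [8316, 5058, 3616] [(8, [1148, 963, 288])]) (.node
  (.leaf [65528, 16636, 10112, 7168] [(10, [16383, 4348, 2946, 1089])]) (.node
  (.leaf [81912, 57468, 20546, 12352] [(11, [20472, 14844, 5126, 3072])]) (.node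
  (.leaf [139256, 94208, 55326, 25600] [(12, [131071, 36856, 30732, 9226, 4097])]) (.node
  (.leaf [1048575, 266232, 161796, 84992, 32771] [(13, [262143, 73720, 61468, 18448, 8193])])
  (.leaf [787008, 431836, 177153, 69632, 32835] [(14, [524287, 133112, 80900, 40964, 16640])]))))))
  (.node (.node (.leaf [65528, 17404, 11778, 6912] [(9, [8191, 2172, 1472, 544])])
  (.leaf [34808, 31748, 11777, 4352] [(11, [32767, 8700, 5888, 2177])])) (.node
  (.leaf [34808, 31756, 9730, 7168] [(10, [10232, 7420, 2562, 1536])]) (.node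
  (.leaf [69624, 63488, 19462, 14336] [(11, [16632, 8324, 8093, 2112])]) (.node (.node
  (.leaf [278520, 253952, 77854, 57345] [(12, [131071, 36856, 30732, 9224, 4097])])
  (.leaf [1048575, 294904, 245772, 73752, 32784] [(14, [524287, 147448, 122892, 36872, 16412])]))
  (.node
  (.leaf [1048575, 294904, 180252, 73776, 36896] [(13, [262143, 66552, 40452, 20482, 8320])])
  (.leaf [756996, 272484, 232588, 82048, 32772] [(7, [1023, 286, 147]), (7, [572, 352, 192])])))))))))
  (.node (.node (.leaf [3068, 1566, 785] [(6, [511, 142, 73])]) (.node (.node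
  (.leaf [9212, 5646, 3336] [(8, [1532, 782, 392])]) (.node
  (.leaf [40952, 29180, 15104, 4609] [(10, [16383, 5116, 2574, 1048])]) (.node
  (.leaf [81912, 57596, 20864, 12289] [(11, [20472, 14364, 5232, 3072])]) (.node
  (.leaf [133112, 97280, 52736, 24832] [(12, [131071, 36856, 30724, 9216, 4110])]) (.node
  (.leaf [1048575, 270328, 159756, 83970, 32774] [(13, [262143, 73720, 61468, 18432, 8216])])
  (.leaf [665620, 457717, 218266, 82944, 36864] [(8, [1532, 782, 392]), (6, [268, 152, 112])]))))))
  (.node (.node (.leaf [49144, 25596, 13826, 6150] [(9, [8191, 2172, 1474, 544])])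
  (.leaf [40952, 28796, 10432, 6144] [(11, [20472, 14588, 7296, 2432])])) (.node
  (.leaf [40952, 28796, 10306, 6176] [(10, [10232, 7172, 2590, 1536])]) (.node
  (.leaf [66040, 48900, 24960, 12544] [(11, [17400, 9732, 5132, 3072])]) (.node (.node
  (.leaf [278520, 188444, 110608, 51216] [(12, [131071, 36856, 30732, 9216, 4108])])
  (.leaf [1048575, 262648, 134924, 71808, 36864] [(14, [524287, 147448, 122892, 36888, 16404])]))
  (.node (.leaf [264184, 146436, 90114, 53248] [(13, [262143, 67576, 39948, 20992, 8193])])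
  (.leaf [654567, 296528, 139280, 66048, 57393] [(3, [31, 9]), (11, [16888, 8960, 5632, 3073])]))))))))
  (.node (.node (.leaf [4604, 2822, 1668] [(7, [572, 352, 208])]) (.node (.node
  (.leaf [65528, 17404, 11782, 6912] [(9, [8191, 2556, 1286, 524])])
  (.leaf [33784, 24076, 13058, 6144] [(11, [32767, 8700, 5890, 2178])])) (.node
  (.leaf [40952, 28796, 10432, 6145] [(10, [10232, 7420, 2566, 1536])]) (.node
  (.leaf [81912, 57348, 20604, 12352] [(11, [16888, 12036, 6528, 3072])]) (.node (.node
  (.leaf [266232, 194572, 105472, 49665] [(12, [131071, 36856, 30748, 9232, 4097])])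
  (.leaf [1048575, 263160, 138752, 94210, 34816] [(14, [524287, 135160, 79884, 41986, 16390])]))
  (.node
  (.leaf [1048575, 270328, 159756, 83976, 32780] [(13, [262143, 66552, 40452, 20480, 8322])])
  (.leaf [777638, 262408, 163848, 66064, 62084] [(3, [31, 9]), (11, [18424, 9228, 5126, 3072])])))))))
  (.node (.node (.node (.leaf [16636, 10114, 7234] [(8, [4095, 1084, 736, 272])])
  (.leaf [40952, 28796, 10434, 6144] [(11, [32767, 8700, 5890, 2179])])) (.node
  (.leaf [40952, 28796, 10434, 6145] [(10, [16383, 4348, 2944, 1089])]) (.node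
  (.leaf [69624, 63516, 19472, 14336] [(11, [20472, 14396, 5216, 3072])]) (.node (.node
  (.leaf [278520, 253952, 77886, 57345] [(12, [131071, 36856, 30720, 9216, 4111])])
  (.leaf [264184, 146432, 90112, 53248] [(14, [524287, 147448, 122908, 36880, 16440])])) (.node
  (.leaf [1048575, 294904, 245760, 73730, 32830] [(13, [262143, 67576, 39964, 20992, 8193])])
  (.leaf [557056, 430825, 149872, 84800, 40962] [(14, [524287, 131576, 67340, 35840, 18432])]))))))
  (.node (.node (.leaf [40952, 28796, 10310, 6177] [(9, [5112, 3708, 1282, 768])])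
  (.leaf [33016, 32671, 8640, 4352] [(11, [32767, 8316, 4544, 2336])])) (.node
  (.leaf [40952, 28676, 10300, 6176] [(10, [8440, 6016, 3264, 1536])]) (.node (.node
  (.leaf [139256, 126976, 38942, 28673] [(11, [65535, 18424, 15372, 4616, 2049])]) (.node
  (.leaf [263160, 196096, 100096, 50176] [(13, [262143, 98296, 49180, 16496, 8384])])
  (.leaf [1048575, 263160, 138752, 94208, 34816] [(14, [524287, 147448, 122892, 36888, 16400])])))
  (.node (.node
  (.leaf [270328, 159756, 83992, 50192] [(12, [131071, 33784, 19980, 10496, 4097])])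
  (.leaf [1048575, 270328, 159756, 83976, 32776] [(14, [524287, 147448, 90140, 36912, 18464])]))
  (.node
  (.leaf [1048575, 263160, 134668, 71688, 36868] [(10, [8440, 6016, 3264, 1536]), (3, [22, 12])])
  (.leaf [1032061, 262176, 135268, 103909, 49216] [(7, [572, 352, 208]), (7, [572, 352, 192])]))))))))))
  (.node (.node (.node (.leaf [3068, 1566, 787] [(5, [255, 70, 36])]) (.node
  (.leaf [4604, 2830, 1664] [(8, [1532, 782, 393])]) (.node (.node
  (.leaf [65528, 16508, 10176, 7200] [(9, [8191, 2556, 1294, 520])])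
  (.leaf [40952, 28924, 10370, 6144] [(11, [20472, 14348, 5368, 3073])])) (.node
  (.leaf [40952, 28924, 10370, 6145] [(10, [9208, 5692, 3330, 1536])]) (.node
  (.leaf [67576, 48140, 26112, 12292] [(11, [32767, 8444, 4480, 2304])]) (.node
  (.leaf [135160, 96256, 52226, 24577] [(12, [131071, 36856, 30732, 9224, 4104])]) (.node
  (.leaf [1048575, 270328, 159756, 114696, 41984] [(13, [262143, 69624, 38940, 20482, 8194])])
  (.leaf [1048575, 278520, 155660, 81928, 32776] [(3, [31, 9]), (11, [17400, 9732, 5378, 3072])]))))))))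
  (.node (.leaf [2300, 1414, 832] [(7, [764, 390, 196])]) (.node (.node
  (.leaf [8444, 4994, 3586] [(8, [4095, 1276, 646, 260])]) (.node
  (.leaf [40952, 28924, 10374, 6145] [(10, [16383, 4156, 2274, 1168])]) (.node
  (.leaf [69624, 47104, 24702, 12289] [(11, [32767, 8444, 4482, 2304])])
  (.leaf [66552, 34304, 31747, 8704] [(12, [131071, 34808, 19484, 10246, 4097])])))) (.node
  (.node (.leaf [49144, 24828, 12674, 6464] [(9, [5112, 3596, 1304, 768])])
  (.leaf [34808, 23552, 12350, 6144] [(11, [32767, 8444, 4482, 2305])])) (.node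
  (.leaf [33784, 24076, 13056, 6148] [(10, [16383, 4220, 2240, 1152])])
  (.leaf [33272, 17152, 9728, 7168] [(11, [17400, 9756, 5122, 3072])])))))) (.node (.node
  (.leaf [2300, 1414, 833] [(6, [268, 152, 112])]) (.node
  (.leaf [4220, 2498, 1792] [(8, [1148, 706, 416])]) (.node (.node
  (.leaf [65528, 16636, 10112, 7169] [(9, [5112, 3708, 1286, 768])])
  (.leaf [33784, 24068, 13058, 6144] [(11, [32767, 8444, 4482, 2306])])) (.node
  (.leaf [40952, 28672, 10302, 6240] [(10, [8696, 5888, 3086, 1536])]) (.node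
  (.leaf [67576, 48140, 26112, 12289] [(11, [16888, 12032, 6528, 3072])]) (.node (.node
  (.leaf [270328, 192512, 104454, 49164] [(12, [131071, 33272, 32512, 8576, 4352])])
  (.leaf [869136, 262168, 164384, 70280, 35336] [(14, [524287, 135160, 79884, 57344, 20996])]))
  (.node
  (.leaf [1048575, 278520, 155660, 81944, 32816] [(10, [8696, 5888, 3086, 1536]), (3, [22, 12])])
  (.leaf [581137, 262912, 149729, 66560, 61446] [(10, [8696, 5888, 3086, 1536]), (4, [127, 38, 20])]))))))))
  (.node (.leaf [2108, 1248, 896] [(7, [2047, 636, 322, 130])]) (.node (.node (.node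
  (.leaf [49144, 24828, 12678, 6465] [(8, [2552, 1852, 642, 384])])
  (.leaf [34808, 23564, 12346, 6144] [(11, [32767, 8444, 4486, 2307])])) (.node
  (.leaf [40952, 28732, 10464, 6160] [(10, [16383, 4220, 2242, 1153])]) (.node
  (.leaf [81912, 57404, 20576, 12352] [(11, [17400, 11780, 6172, 3072])]) (.node
  (.leaf [132088, 97796, 49920, 25088] [(12, [131071, 34808, 19468, 10264, 4100])]) (.node
  (.leaf [1048575, 278520, 155676, 81968, 32808] [(10, [16383, 4220, 2242, 1153]), (3, [22, 12])])
  (.leaf [1048526, 262424, 135681, 67584, 64264] [(1, [3]), (13, [262143, 66552, 34304, 19456, 14336])]))))))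
  (.node (.node (.leaf [49144, 24636, 12512, 6528] [(9, [8191, 2108, 1120, 576])])
  (.leaf [33016, 16772, 16221, 4224] [(11, [20472, 14336, 5150, 3120])])) (.node
  (.leaf [33784, 24064, 13058, 6145] [(10, [8696, 4864, 2562, 1538])]) (.node
  (.leaf [66040, 48896, 24960, 12544] [(11, [65535, 24568, 12316, 4144, 2080])]) (.node
  (.leaf [135160, 79884, 41992, 25088] [(10, [8696, 4864, 2562, 1538]), (2, [15, 6])]) (.node
  (.leaf [263160, 146944, 90368, 53248] [(13, [262143, 69624, 38924, 20488, 8200])])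
  (.leaf [791464, 291392, 189213, 69632, 32792] [(3, [31, 9]), (11, [16888, 9984, 7168, 3584])]))))))))))))))
  (.node (.node (.node (.node (.leaf [254, 127] [(1, [3])]) (.leaf [190, 96] [(5, [127, 62])]))
  (.node (.leaf [190, 97] [(4, [63, 30])]) (.node (.node (.node
  (.leaf [2556, 1822, 913] [(5, [94, 48])]) (.leaf [2172, 1478, 768] [(8, [2047, 542, 368])]))
  (.node (.leaf [2172, 1478, 769] [(7, [636, 334, 200])]) (.node (.node (.node
  (.leaf [65528, 17404, 11782, 6157] [(8, [1084, 738, 384])])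
  (.leaf [16892, 12032, 6144] [(11, [32767, 9212, 7682, 2055])])) (.node
  (.leaf [65528, 16892, 12032, 6272] [(10, [16383, 4604, 3840, 1027])]) (.node
  (.leaf [73720, 61500, 22528, 12336] [(11, [18424, 15484, 5634, 3072])])
  (.leaf [66040, 34560, 23552, 12288] [(12, [131071, 34808, 19468, 14338, 4098])])))) (.node
  (.node (.leaf [40952, 28924, 14720, 7169] [(9, [4600, 3852, 1410, 768])])
  (.leaf [34808, 19460, 14365, 5120] [(11, [18424, 15360, 5694, 3104])])) (.node
  (.leaf [36856, 30748, 11280, 6152] [(10, [9208, 7740, 2816, 1536])]) (.node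
  (.leaf [67576, 39940, 30208, 14336] [(11, [16888, 8960, 7811, 2049])]) (.node
  (.leaf [131320, 66432, 65219, 16417] [(12, [131071, 34808, 19460, 14340, 4098])])
  (.leaf [131192, 65728, 65441, 16448] [(10, [9208, 7740, 2816, 1536]), (3, [22, 12])]))))))))
  (.node (.node (.leaf [2172, 1984, 992] [(6, [284, 176, 97])]) (.node (.node (.node
  (.leaf [16892, 12038, 6284] [(8, [1084, 738, 385])])
  (.leaf [36856, 30748, 11314, 6144] [(11, [32767, 9212, 7686, 2055])])) (.node
  (.leaf [16892, 12032, 6145] [(10, [16383, 4604, 3842, 1027])])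
  (.leaf [34808, 31748, 8199, 4097] [(11, [18424, 15372, 5656, 3072])]))) (.node (.node
  (.leaf [65528, 16892, 12032, 6273] [(9, [8191, 2300, 1920, 513])])
  (.leaf [36856, 30780, 11296, 6144] [(11, [32767, 8444, 4482, 2816])])) (.node
  (.leaf [36856, 22532, 13374, 6656] [(10, [9208, 7692, 2307, 1152])])
  (.leaf [34808, 17412, 15365, 4098] [(11, [17400, 9728, 7183, 2560])]))))) (.node (.node (.node
  (.leaf [8444, 6018, 3142] [(7, [540, 368, 192])])
  (.leaf [8444, 6016, 3072] [(10, [16383, 4604, 2318, 1283])])) (.node (.node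
  (.leaf [16636, 12160, 6209] [(9, [8191, 2300, 1158, 641])])
  (.leaf [33784, 32260, 8455, 4097] [(11, [32760, 8444, 6016, 3136])])) (.node
  (.leaf [36856, 30780, 11296, 6145] [(10, [9208, 7740, 2818, 1536])])
  (.leaf [34808, 17412, 15367, 4098] [(11, [65535, 20472, 10268, 6192, 2056])])))) (.node (.node
  (.node (.leaf [65528, 16636, 12160, 6337] [(8, [4095, 1148, 578, 320])])
  (.leaf [36856, 30780, 11298, 6144] [(11, [32767, 8316, 4546, 2848])])) (.node
  (.leaf [36856, 30780, 11298, 6145] [(10, [9208, 7680, 2846, 1552])])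
  (.leaf [34808, 31744, 8199, 4097] [(11, [18424, 15388, 5648, 3072])]))) (.node (.node
  (.leaf [36856, 30724, 11324, 6177] [(9, [4600, 3868, 1408, 768])])
  (.leaf [36856, 18492, 10336, 6144] [(11, [18424, 15372, 5632, 3084])])) (.node
  (.leaf [33784, 19972, 15104, 7168] [(10, [8696, 4864, 3591, 1280])]) (.node
  (.leaf [65784, 33664, 32451, 8225] [(11, [16504, 16351, 4192, 2112])])
  (.leaf [65656, 32960, 32673, 8256] [(12, [131071, 40952, 20508, 12304, 4112])]))))))))))
  (.node (.node (.leaf [190, 99] [(3, [31, 14])]) (.node (.node (.node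
  (.leaf [3068, 1662, 835] [(5, [94, 49])]) (.node
  (.leaf [4348, 2944, 1539] [(8, [2047, 574, 353])]) (.node (.node
  (.leaf [40952, 28924, 14722, 7232] [(9, [8191, 2556, 1806, 513])])
  (.leaf [36856, 30972, 11392, 6144] [(11, [20472, 14588, 7174, 3584])])) (.node
  (.leaf [34808, 31996, 11776, 6400] [(10, [10232, 7292, 3584, 1792])]) (.node
  (.leaf [67576, 35868, 22530, 12290] [(11, [17400, 15872, 4355, 2049])])
  (.leaf [69624, 38912, 29699, 8193] [(12, [131071, 49144, 24636, 12320, 4128])])))))) (.node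
  (.leaf [2300, 1923, 704] [(7, [1023, 286, 176])]) (.node (.node
  (.leaf [8700, 5890, 3078] [(8, [4095, 1276, 902, 257])]) (.node
  (.leaf [16892, 12032, 6272] [(10, [16383, 5116, 3586, 1030])])
  (.leaf [34808, 31748, 8707, 4097] [(11, [18424, 15484, 5696, 3072])]))) (.node (.node
  (.leaf [40952, 29180, 14342, 7172] [(9, [5112, 3644, 1792, 896])])
  (.leaf [36856, 18556, 10246, 6144] [(11, [20472, 14364, 7216, 3584])])) (.node
  (.leaf [36856, 18556, 10246, 6145] [(10, [10232, 7180, 2569, 1280])])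
  (.leaf [34808, 19456, 14851, 4097] [(11, [18424, 9276, 5122, 3072])])))))) (.node (.node
  (.leaf [2300, 1926, 960] [(6, [284, 178, 97])]) (.node
  (.leaf [4348, 2946, 1538] [(8, [1148, 960, 480])]) (.node (.node
  (.leaf [16892, 12032, 6273] [(9, [8191, 2556, 1794, 514])])
  (.leaf [34808, 31748, 8711, 4097] [(11, [20472, 14396, 7202, 3584])])) (.node
  (.leaf [40952, 20604, 12480, 6272] [(10, [9208, 4636, 2566, 1536])]) (.node (.node
  (.leaf [132088, 73216, 61702, 30720] [(11, [20472, 10244, 7197, 3072])]) (.node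
  (.leaf [294904, 147516, 82144, 49280] [(13, [262143, 69624, 47116, 27648, 8197])])
  (.leaf [913256, 266250, 165028, 66560, 33942] [(14, [524287, 132088, 73216, 61442, 16512])])))
  (.node (.leaf [131320, 65924, 65349, 16544] [(12, [131071, 34808, 23564, 12296, 4352])])
  (.node
  (.leaf [1048575, 266232, 145420, 122880, 37376] [(10, [9208, 4636, 2566, 1536]), (3, [22, 12])])
  (.leaf [966386, 270400, 206216, 78113, 34816] [(5, [94, 49]), (9, [5112, 2564, 1805, 768])]))))))))
  (.node (.leaf [2172, 1472, 769] [(7, [2047, 636, 450, 129])]) (.node (.node (.node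
  (.leaf [16636, 12160, 6337] [(8, [4095, 1276, 896, 257])])
  (.leaf [33784, 17924, 11266, 6146] [(11, [32767, 8444, 4994, 2752])])) (.node
  (.leaf [40952, 20604, 12482, 6272] [(10, [10232, 7196, 3602, 1792])]) (.node
  (.leaf [67576, 35852, 22534, 12292] [(11, [18424, 9244, 5136, 3080])]) (.node
  (.leaf [133112, 72708, 45570, 24832] [(12, [131071, 34808, 23552, 12302, 4352])]) (.node
  (.leaf [1048575, 278520, 188416, 98334, 34832] [(13, [262143, 66552, 40460, 28672, 8193])])
  (.leaf [1040379, 395401, 196608, 82944, 39116] [(5, [94, 49]), (9, [5112, 2572, 1538, 770])]))))))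
  (.node (.node (.leaf [40952, 28796, 14402, 7170] [(9, [4600, 2316, 1282, 769])])
  (.leaf [34808, 31744, 8711, 4097] [(11, [20472, 10300, 6240, 3136])])) (.node
  (.leaf [36856, 18492, 10274, 6160] [(10, [9208, 4612, 2564, 1540])]) (.node
  (.leaf [73720, 36892, 20528, 12320] [(11, [16888, 8960, 5632, 3073])]) (.node
  (.leaf [135160, 71692, 45064, 24584] [(12, [131071, 33272, 20228, 14336, 4097])]) (.node
  (.leaf [266232, 145420, 91136, 49664] [(10, [9208, 4612, 2564, 1540]), (3, [22, 12])])
  (.leaf [687826, 509133, 164388, 65668, 32784] [(5, [94, 49]), (9, [4344, 3968, 1472, 768])])))))))))))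
  (.node (.node (.node (.node (.leaf [3068, 1662, 839] [(4, [46, 24])])
  (.leaf [2300, 1438, 768] [(8, [2047, 574, 355])])) (.node
  (.leaf [2300, 1438, 769] [(7, [1023, 286, 177])]) (.node (.node (.node
  (.leaf [16636, 12162, 6338] [(8, [1148, 718, 384])])
  (.leaf [17404, 11778, 6144] [(11, [32767, 10236, 7174, 2076])]))
  (.leaf [8700, 5888, 3072] [(10, [10232, 7420, 3590, 1792])])) (.node (.node
  (.leaf [49144, 25596, 12806, 6657] [(9, [5112, 3708, 1792, 896])])
  (.leaf [36856, 18444, 10246, 6145] [(11, [32767, 8700, 4866, 2688])])) (.node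
  (.leaf [34808, 31772, 11776, 6400] [(10, [9208, 7932, 2816, 1536])])
  (.leaf [36856, 18444, 10246, 6144] [(11, [16888, 8452, 7941, 2176])])))))) (.node (.node
  (.leaf [2300, 1934, 960] [(6, [511, 142, 88])]) (.node
  (.leaf [4220, 3010, 1568] [(8, [1148, 718, 385])]) (.node
  (.leaf [8700, 5888, 3073] [(9, [8191, 2172, 1984, 544])]) (.node
  (.leaf [34808, 31804, 11776, 6400] [(10, [8696, 4892, 3584, 1792])])
  (.leaf [36856, 18436, 10244, 6148] [(11, [18424, 9228, 5122, 3073])]))))) (.node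
  (.leaf [2108, 1504, 784] [(7, [572, 358, 192])]) (.node (.node (.node
  (.leaf [49144, 25596, 12814, 6659] [(8, [2552, 1852, 896, 448])])
  (.leaf [33784, 32260, 8967, 4224] [(11, [32767, 8700, 4870, 2689])])) (.node
  (.leaf [34808, 31804, 11778, 6400] [(10, [16383, 4348, 2434, 1344])])
  (.leaf [36856, 30724, 8205, 4098] [(11, [18424, 9228, 5126, 3073])]))) (.node (.node
  (.leaf [40952, 28796, 14528, 7169] [(9, [4600, 3964, 1408, 768])])
  (.leaf [36856, 18460, 10254, 6144] [(11, [17400, 15900, 5888, 3200])])) (.node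
  (.leaf [36856, 18460, 10254, 6145] [(10, [8696, 4864, 3719, 1025])]) (.node
  (.leaf [67576, 39936, 21006, 12800] [(11, [18424, 9228, 5126, 3072])])
  (.leaf [73720, 36892, 20496, 12288] [(12, [131071, 33784, 19968, 14338, 4097])])))))))) (.node
  (.node (.node (.leaf [2556, 1806, 920] [(5, [156, 82, 50])]) (.node (.node
  (.leaf [8444, 6016, 3139] [(8, [1148, 966, 480])]) (.node
  (.leaf [40952, 28924, 14470, 7168] [(10, [16383, 5116, 3598, 1033])]) (.node
  (.leaf [73720, 61692, 22528, 12480] [(11, [18424, 15364, 5694, 3072])])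
  (.leaf [73720, 36988, 20482, 12288] [(12, [131071, 33784, 32256, 9984, 5120])])))) (.node
  (.node (.leaf [17404, 11778, 6150] [(9, [8191, 2556, 1798, 516])])
  (.leaf [36856, 18492, 10242, 6145] [(11, [20472, 14460, 7234, 3584])])) (.node
  (.leaf [36856, 30844, 11328, 6176] [(10, [9208, 7680, 2846, 1536])])
  (.leaf [36856, 18492, 10242, 6144] [(11, [20472, 10244, 7229, 3072])]))))) (.node (.node
  (.node (.leaf [9212, 7694, 3848] [(7, [572, 480, 240])]) (.node
  (.leaf [17404, 11782, 6148] [(10, [16383, 5116, 3598, 1035])])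
  (.leaf [36856, 30748, 8211, 4097] [(11, [18424, 15388, 5744, 3072])]))) (.node
  (.leaf [8700, 5890, 3074] [(9, [8191, 2556, 1798, 517])]) (.node
  (.leaf [36856, 30844, 11264, 6240] [(10, [9208, 7684, 2846, 1536])])
  (.leaf [36856, 18436, 14365, 4098] [(11, [18424, 9244, 5126, 3072])])))) (.node
  (.leaf [4348, 2944, 1537] [(8, [4095, 1276, 898, 258])]) (.node (.node
  (.leaf [40952, 28924, 14466, 7170] [(9, [4600, 3840, 1422, 768])])
  (.leaf [36856, 18460, 10256, 6152] [(11, [18424, 15420, 5664, 3088])])) (.node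
  (.leaf [36856, 18492, 10246, 6148] [(10, [9208, 4620, 2562, 1537])]) (.node
  (.leaf [73720, 36924, 20514, 12304] [(11, [18424, 9220, 5124, 3076])]) (.node
  (.leaf [147448, 73756, 41008, 24608] [(10, [9208, 4620, 2562, 1537]), (2, [15, 6])]) (.node
  (.leaf [663648, 291864, 230016, 68096, 53336] [(10, [9208, 4620, 2562, 1537]), (3, [22, 12])])
  (.leaf [764390, 442124, 163848, 77864, 32800] [(7, [572, 480, 240]), (7, [572, 352, 192])])))))))))
  (.node (.node (.node (.leaf [4604, 3846, 1924] [(6, [284, 178, 96])])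
  (.leaf [4348, 2946, 1536] [(9, [8191, 2556, 1798, 519])]))
  (.leaf [2172, 1472, 768] [(8, [4095, 1276, 898, 259])])) (.node (.node
  (.leaf [4220, 3008, 1569] [(7, [2047, 636, 448, 129])]) (.node (.node
  (.leaf [65528, 16636, 12160, 6209] [(9, [8191, 2172, 1218, 672])])
  (.leaf [36856, 18460, 10256, 6145] [(11, [32767, 8316, 4546, 2816])])) (.node
  (.leaf [40952, 20492, 12536, 6272] [(10, [9208, 4620, 2566, 1537])]) (.node
  (.leaf [73720, 36924, 20514, 12290] [(11, [16888, 9984, 5248, 3200])]) (.node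
  (.leaf [147448, 73788, 41056, 24592] [(12, [131071, 33784, 19996, 14336, 4097])]) (.node
  (.leaf [656192, 327688, 156200, 101344, 49928] [(10, [9208, 4620, 2566, 1537]), (3, [22, 12])])
  (.leaf [659732, 263424, 227770, 66048, 54370] [(4, [46, 24]), (10, [10232, 5132, 3096, 1536])])))))))
  (.node (.node (.node (.leaf [49144, 24700, 12738, 6944] [(8, [2296, 1980, 704, 384])])
  (.leaf [40952, 20480, 12350, 6368] [(11, [32767, 8316, 4546, 2817])])) (.node
  (.leaf [36856, 30724, 11324, 6176] [(10, [16383, 4156, 2272, 1408])]) (.node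
  (.leaf [73720, 36892, 20530, 12296] [(11, [18424, 9244, 5134, 3072])])
  (.leaf [73720, 36924, 20512, 12288] [(10, [16383, 4156, 2272, 1408]), (2, [15, 6])])))) (.node
  (.node (.leaf [36856, 30732, 11288, 6192] [(9, [5112, 2564, 1805, 768])])
  (.leaf [33784, 19972, 14593, 5120] [(11, [18424, 9244, 5134, 3073])])) (.node
  (.leaf [33784, 19968, 10498, 6401] [(10, [9208, 4620, 2566, 1536])])
  (.leaf [36856, 18460, 10256, 6144] [(11, [65535, 16888, 9996, 7168, 2049])])))))))))) (.node
  (.node (.node (.leaf [190, 103] [(2, [15, 6])]) (.node (.node (.node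
  (.leaf [4092, 1534, 775] [(5, [94, 51])]) (.leaf [2300, 1422, 768] [(8, [2047, 638, 323])]))
  (.node (.leaf [2556, 1806, 896] [(7, [1023, 318, 161])]) (.node (.node (.node
  (.leaf [20476, 14350, 7192] [(8, [1148, 710, 384])])
  (.leaf [36856, 30972, 11648, 6144] [(11, [32767, 12284, 6158, 2073])])) (.node
  (.leaf [49144, 25084, 13058, 6656] [(10, [16383, 6140, 3078, 1036])])
  (.leaf [34808, 19460, 10752, 6145] [(11, [17400, 16124, 5888, 3072])]))) (.node (.node
  (.leaf [16892, 12032, 6528] [(9, [4600, 3840, 1438, 768])])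
  (.leaf [34808, 19460, 10754, 6145] [(11, [24568, 12540, 6528, 3328])])) (.node
  (.leaf [33784, 17980, 11296, 6160] [(10, [10232, 5124, 3198, 1536])])
  (.leaf [34808, 19460, 10754, 6144] [(11, [16632, 8324, 8077, 2112])])))))) (.node (.node
  (.leaf [2556, 1806, 897] [(6, [511, 158, 80])]) (.node (.node
  (.leaf [10236, 7182, 3592] [(8, [1276, 902, 448])]) (.node
  (.leaf [40952, 28924, 14720, 4864] [(10, [16383, 6140, 3086, 1033])])
  (.leaf [34808, 19468, 10754, 6144] [(11, [24568, 12412, 6151, 3072])]))) (.node (.node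
  (.leaf [49144, 25084, 13058, 6658] [(9, [8191, 3068, 1542, 516])])
  (.leaf [34808, 19468, 10752, 6145] [(11, [18424, 15484, 5632, 3168])])) (.node
  (.leaf [40952, 20492, 12408, 6208] [(10, [12280, 6204, 3075, 1536])])
  (.leaf [34808, 17412, 15365, 4608] [(11, [16888, 8204, 8185, 2112])]))))) (.node (.node
  (.leaf [5116, 3590, 1796] [(7, [636, 448, 224])]) (.node (.node
  (.leaf [16892, 12034, 6528] [(9, [8191, 3068, 1542, 517])])
  (.leaf [34808, 31756, 9731, 4097] [(11, [24568, 12540, 6530, 3328])])) (.node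
  (.leaf [40952, 20508, 12400, 6208] [(10, [8696, 8060, 2944, 1536])])
  (.leaf [34808, 19460, 10756, 6144] [(11, [16632, 10116, 7168, 3584])])))) (.node (.node
  (.leaf [8444, 6016, 3264] [(8, [4095, 1532, 770, 258])]) (.node
  (.leaf [33784, 19980, 14616, 7168] [(10, [12280, 6268, 3264, 1664])]) (.node
  (.leaf [81912, 40972, 24824, 12416] [(11, [17400, 9732, 5378, 3073])]) (.node
  (.leaf [139256, 77852, 43024, 24577] [(10, [12280, 6268, 3264, 1664]), (2, [15, 6])]) (.node
  (.leaf [278520, 155652, 86016, 49182] [(13, [262143, 67576, 48140, 24578, 8194])])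
  (.leaf [1036281, 459144, 134729, 66560, 32904] [(5, [94, 51]), (9, [5112, 2572, 1538, 770])]))))))
  (.node (.node (.leaf [36856, 30724, 11268, 6268] [(9, [5112, 2564, 1598, 768])])
  (.leaf [34808, 19468, 10758, 6144] [(11, [16632, 10116, 7170, 3585])])) (.node
  (.leaf [33272, 20224, 14466, 7168] [(10, [8312, 5056, 3584, 1792])]) (.node (.node
  (.leaf [133112, 80908, 57864, 28673] [(11, [17400, 9732, 5378, 3072])])
  (.leaf [139256, 77852, 43024, 24576] [(13, [262143, 66552, 40448, 28930, 8576])])) (.node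
  (.node (.leaf [266232, 161804, 115714, 57346] [(12, [131071, 32888, 16576, 16367, 4160])])
  (.leaf [1048575, 270328, 192516, 98310, 32772] [(14, [524287, 139256, 94220, 51208, 17416])]))
  (.node
  (.leaf [1048575, 270328, 192516, 98310, 32773] [(10, [8312, 5056, 3584, 1792]), (3, [22, 12])])
  (.leaf [1012217, 309372, 205568, 65604, 33024] [(14, [524287, 135160, 96256, 49154, 16386])])))))))))))
  (.node (.node (.node (.node (.leaf [4092, 1534, 783] [(4, [46, 25])])
  (.leaf [2556, 1807, 640] [(8, [2047, 638, 327])])) (.node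
  (.leaf [2556, 1822, 896] [(7, [1023, 318, 163])]) (.node (.node (.node
  (.leaf [18428, 11278, 6200] [(8, [1276, 903, 320])])
  (.leaf [65528, 18428, 11270, 6144] [(11, [32767, 12284, 6158, 2104])])) (.node
  (.leaf [17404, 11778, 6400] [(10, [16383, 4348, 3968, 1216])])
  (.leaf [36856, 30732, 9219, 4097] [(11, [32760, 9212, 5634, 3072])]))) (.node
  (.leaf [8700, 5888, 3200] [(9, [8191, 2108, 1248, 640])]) (.node
  (.leaf [33016, 20352, 14528, 7168] [(10, [16376, 4604, 2816, 1536])])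
  (.leaf [36856, 22528, 13319, 4097] [(11, [18424, 15364, 4611, 2049])])))))) (.node (.node
  (.leaf [2556, 1822, 897] [(6, [511, 158, 81])]) (.node (.node
  (.leaf [9212, 5646, 3096] [(8, [1276, 910, 448])]) (.node
  (.leaf [65528, 18428, 11270, 6148] [(10, [16383, 6140, 3086, 1048])])
  (.leaf [33272, 20228, 14336, 7168] [(11, [16888, 16128, 6018, 3072])]))) (.node (.node
  (.leaf [17404, 11778, 6402] [(9, [6136, 3076, 1540, 764])])
  (.leaf [40952, 20492, 12792, 6144] [(11, [32760, 9212, 5634, 3074])])) (.node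
  (.leaf [40952, 20484, 12414, 6209] [(10, [8696, 4868, 2688, 1538])]) (.node
  (.leaf [67576, 39964, 22016, 12544] [(11, [20472, 10240, 6206, 3104])]) (.node
  (.leaf [131320, 65924, 65357, 16544] [(12, [131071, 34808, 23564, 12290, 4100])]) (.node
  (.leaf [630928, 308480, 197832, 82072, 33920] [(13, [262143, 67576, 48132, 25088, 8193])])
  (.leaf [722944, 270960, 132096, 69728, 51779] [(4, [46, 25]), (10, [9208, 5632, 3342, 1536])]))))))))
  (.node (.node (.leaf [4604, 2822, 1548] [(7, [572, 352, 193])]) (.node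
  (.leaf [8700, 5890, 3200] [(9, [8191, 3068, 1542, 524])]) (.node
  (.leaf [40952, 20492, 12792, 6148] [(10, [16376, 4604, 2818, 1536])])
  (.leaf [36856, 22528, 13327, 4097] [(11, [18424, 15372, 4611, 2049])])))) (.node
  (.leaf [4348, 2944, 1600] [(8, [2552, 1796, 702, 384])]) (.node (.node
  (.leaf [33784, 32268, 12032, 6147] [(9, [8184, 2300, 1408, 768])])
  (.leaf [36856, 30724, 9229, 4098] [(11, [20472, 10244, 6206, 3105])])) (.node
  (.leaf [33272, 20224, 14342, 7168] [(10, [10232, 5120, 3102, 1552])]) (.node (.node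
  (.leaf [133112, 97284, 50690, 27648] [(11, [18424, 11264, 6663, 2049])])
  (.leaf [131320, 65924, 65357, 16512] [(13, [262143, 69624, 47116, 24586, 8204])])) (.node
  (.node (.leaf [266232, 161792, 114702, 57352] [(12, [131071, 33784, 24068, 12544, 4097])])
  (.leaf [1048575, 270328, 192516, 100356, 32772] [(14, [524287, 147448, 90140, 53264, 18448])]))
  (.node
  (.leaf [1048575, 266232, 137228, 77832, 40968] [(10, [10232, 5120, 3102, 1552]), (3, [22, 12])])
  (.leaf [1016040, 393344, 131204, 85888, 36872] [(7, [572, 352, 193]), (7, [572, 352, 192])]))))))))))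
  (.node (.node (.node (.leaf [3068, 1566, 880] [(5, [255, 78, 40])]) (.node
  (.leaf [4604, 2830, 1544] [(8, [1276, 910, 449])]) (.node (.node
  (.leaf [65528, 18428, 11270, 6156] [(9, [8191, 3068, 1550, 520])])
  (.leaf [40952, 20492, 12794, 6144] [(11, [16888, 16132, 6016, 3074])])) (.node
  (.leaf [40952, 20492, 12794, 6145] [(10, [10232, 5244, 3078, 1536])])
  (.leaf [33016, 16516, 16269, 4160] [(11, [20472, 10244, 6396, 3072])]))))) (.node
  (.leaf [2300, 1414, 772] [(7, [636, 454, 224])]) (.node (.node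
  (.leaf [8700, 5890, 3202] [(8, [4095, 1532, 774, 260])]) (.node
  (.leaf [33784, 32508, 12032, 6272] [(10, [16383, 4156, 2528, 1296])]) (.node
  (.leaf [67576, 64512, 24064, 12289] [(11, [32767, 8444, 4992, 2560])]) (.node
  (.leaf [135160, 71692, 61440, 30720] [(12, [131071, 34808, 23564, 12294, 4097])]) (.node
  (.leaf [873472, 488925, 205536, 69640, 40978] [(13, [262143, 69624, 47132, 24578, 8194])])
  (.leaf [1004308, 294944, 141901, 65568, 41560] [(4, [46, 25]), (10, [8696, 4864, 3719, 1025])]))))))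
  (.node (.node (.leaf [49144, 24828, 13184, 6720] [(9, [5112, 2572, 1592, 768])])
  (.leaf [33784, 32256, 12032, 6144] [(11, [20472, 10252, 6394, 3073])])) (.node
  (.leaf [33784, 19972, 14596, 7168] [(10, [10232, 5124, 3196, 1536])]) (.node
  (.leaf [67576, 39936, 29190, 14336] [(11, [17400, 9756, 5376, 3072])]) (.node (.node
  (.leaf [270328, 159772, 116738, 57346] [(12, [131071, 34808, 23564, 12290, 4098])])
  (.leaf [1048575, 278520, 188428, 98314, 32776] [(14, [524287, 139256, 94220, 49176, 16389])]))
  (.node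
  (.leaf [1048575, 278520, 188428, 98314, 32777] [(10, [10232, 5124, 3196, 1536]), (3, [22, 12])])
  (.leaf [1048061, 317160, 131200, 71716, 49160] [(14, [524287, 139256, 94212, 49156, 16388])])))))))))
  (.node (.node (.leaf [2556, 1798, 900] [(6, [316, 224, 112])]) (.node
  (.leaf [4348, 2946, 1600] [(8, [1148, 706, 386])]) (.node (.node
  (.leaf [36856, 30844, 11330, 6209] [(9, [8184, 2300, 1410, 768])])
  (.leaf [36856, 22532, 13343, 4098] [(11, [32767, 8444, 4992, 2561])])) (.node
  (.leaf [40952, 20604, 12354, 6208] [(10, [8440, 5004, 3584, 1792])])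
  (.leaf [33272, 18188, 11264, 6144] [(11, [18424, 11264, 6671, 2049])]))))) (.node
  (.leaf [2172, 1472, 800] [(7, [2047, 764, 386, 130])]) (.node (.node (.node
  (.leaf [49144, 24828, 13186, 6721] [(8, [4088, 1148, 704, 384])])
  (.leaf [33784, 32284, 12032, 6144] [(11, [32767, 8316, 5056, 2593])])) (.node
  (.leaf [33784, 32268, 12032, 6145] [(10, [10232, 5132, 3192, 1540])]) (.node
  (.leaf [67576, 39948, 29186, 14336] [(11, [16888, 16128, 6016, 3072])]) (.node
  (.leaf [133112, 80896, 57350, 28672] [(12, [131071, 34808, 23556, 12300, 4098])]) (.node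
  (.leaf [1048575, 278520, 188428, 98328, 32788] [(10, [10232, 5132, 3192, 1540]), (3, [22, 12])])
  (.leaf [525440, 490942, 155648, 114790, 33408] [(4, [46, 25]), (10, [8696, 7936, 2944, 1536])]))))))
  (.node (.node (.leaf [33784, 32260, 12032, 6150] [(9, [5112, 2564, 1596, 768])]) (.node
  (.leaf [81912, 40964, 24636, 12512] [(11, [20472, 10300, 6178, 3104])])
  (.leaf [66552, 40448, 28672, 14336] [(12, [131071, 36856, 22556, 12336, 4128])]))) (.node
  (.leaf [33784, 19968, 14598, 7168] [(10, [9208, 5632, 3335, 1025])]) (.node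
  (.leaf [66552, 36364, 22536, 12292] [(11, [65535, 17400, 11788, 6146, 2050])]) (.node (.node
  (.leaf [270328, 159748, 116748, 57352] [(10, [9208, 5632, 3335, 1025]), (2, [15, 6])])
  (.leaf [907752, 262664, 166081, 82944, 51472] [(14, [524287, 139256, 94220, 49162, 16393])]))
  (.node
  (.leaf [583497, 283044, 255592, 66562, 33328] [(13, [262143, 69624, 47108, 24580, 8196])])
  (.leaf [524372, 524245, 150016, 65538, 42322] [(10, [9208, 5632, 3335, 1025]), (4, [127, 38, 20])]))))))))))))
  (.node (.node (.node (.node (.node (.leaf [4092, 1534, 799] [(3, [22, 12])])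
  (.leaf [2556, 1406, 768] [(8, [2047, 638, 335])])) (.node
  (.leaf [2556, 1854, 896] [(7, [1023, 318, 167])]) (.node (.node (.node
  (.leaf [65528, 20476, 14366, 7171] [(8, [1276, 702, 384])])
  (.leaf [18428, 11270, 6144] [(11, [32767, 9212, 7686, 2307])]))
  (.leaf [9212, 5634, 3072] [(10, [16383, 4604, 3842, 1153])]))
  (.leaf [4604, 2816, 1536] [(9, [8191, 2300, 1920, 576])])))) (.node (.node
  (.leaf [3068, 1598, 864] [(6, [511, 158, 83])]) (.node (.node (.node
  (.leaf [16892, 12046, 6536] [(8, [1276, 926, 448])])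
  (.leaf [40952, 20732, 12430, 6144] [(11, [32767, 12284, 6174, 2160])])) (.node
  (.leaf [18428, 11270, 6148] [(10, [16383, 4604, 3846, 1153])])
  (.leaf [40952, 20492, 12344, 6144] [(11, [20472, 10364, 6214, 3072])]))) (.node
  (.leaf [9212, 5634, 3074] [(9, [8191, 2300, 1922, 576])]) (.node
  (.leaf [40952, 20732, 12418, 6146] [(10, [10232, 5180, 3106, 1536])])
  (.leaf [40952, 20484, 12348, 6144] [(11, [20472, 10268, 6150, 3072])]))))) (.node (.node
  (.node (.leaf [8444, 6022, 3268] [(7, [636, 350, 192])])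
  (.leaf [9212, 5638, 3072] [(10, [16383, 6140, 3086, 1080])]))
  (.leaf [4604, 2818, 1536] [(9, [8191, 2300, 1922, 577])]))
  (.leaf [2300, 1408, 768] [(8, [4095, 1148, 960, 288])])))) (.node (.node (.node
  (.leaf [3068, 1598, 865] [(5, [255, 78, 41])])
  (.leaf [2300, 1408, 769] [(8, [1532, 798, 432])])) (.node
  (.leaf [2172, 1478, 800] [(7, [636, 462, 224])]) (.node
  (.leaf [4604, 2818, 1538] [(8, [4095, 1148, 962, 288])]) (.node (.node
  (.leaf [65528, 16892, 12032, 6528] [(9, [4344, 3968, 1474, 768])])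
  (.leaf [40952, 20508, 12400, 6144] [(11, [32767, 8444, 4992, 2624])])) (.node
  (.leaf [33784, 32256, 12032, 6272] [(10, [10232, 5148, 3078, 1536])]) (.node
  (.leaf [81912, 41020, 24610, 12320] [(11, [20472, 10244, 6204, 3072])]) (.node
  (.leaf [132088, 69132, 47104, 25600] [(12, [131071, 34808, 23564, 12800, 4097])]) (.node
  (.leaf [263160, 146944, 90114, 49153] [(10, [10232, 5148, 3078, 1536]), (3, [22, 12])])
  (.leaf [905442, 332240, 139272, 67586, 32960] [(7, [636, 462, 224]), (7, [572, 352, 192])])))))))))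
  (.node (.node (.leaf [2172, 1478, 801] [(6, [316, 174, 96])])
  (.leaf [2300, 1410, 768] [(8, [1084, 738, 400])])) (.node
  (.leaf [2300, 1410, 769] [(7, [2047, 572, 480, 144])]) (.node (.node (.node
  (.leaf [65528, 16892, 12034, 6529] [(8, [1148, 704, 384])])
  (.leaf [40952, 20540, 12390, 6144] [(11, [32767, 8444, 4994, 2625])])) (.node
  (.leaf [34808, 31772, 11792, 6152] [(10, [16383, 4220, 2496, 1312])]) (.node
  (.leaf [81912, 40988, 24626, 12320] [(11, [20472, 10268, 6194, 3072])])
  (.leaf [66040, 36620, 22528, 12288] [(12, [131071, 33016, 17284, 9730, 5120])])))) (.node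
  (.node (.leaf [33784, 32268, 12032, 6273] [(9, [5112, 2572, 1538, 770])]) (.node
  (.leaf [81912, 41084, 24770, 12290] [(11, [16888, 16128, 6016, 3136])]) (.node
  (.leaf [163832, 81932, 49274, 24640] [(12, [131071, 34808, 23580, 12802, 4098])]) (.node
  (.leaf [1048575, 266232, 161796, 114688, 34306] [(10, [10232, 5132, 3096, 1536]), (3, [29, 12])])
  (.leaf [1013242, 266496, 231770, 69888, 32788] [(10, [10232, 5132, 3096, 1536]), (4, [38, 20])])))))
  (.node (.leaf [40952, 20540, 12384, 6145] [(10, [10232, 5132, 3096, 1536])])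
  (.leaf [33016, 18308, 11264, 6144] [(11, [65535, 17400, 11788, 6400, 2049])])))))))) (.node
  (.node (.node (.node (.leaf [3068, 1598, 867] [(4, [127, 38, 20])]) (.node
  (.leaf [4604, 2818, 1542] [(8, [1532, 798, 433])]) (.node (.node
  (.leaf [49144, 25084, 16128, 6528] [(9, [8191, 3068, 1566, 528])])
  (.leaf [36856, 31228, 11520, 6144] [(11, [20472, 14588, 7552, 3584])])) (.node
  (.leaf [65528, 17404, 11776, 6400] [(10, [8696, 7948, 2944, 1536])])
  (.leaf [34808, 31744, 11776, 6144] [(11, [32767, 8700, 4864, 2560])]))))) (.node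
  (.leaf [2300, 1410, 771] [(7, [764, 398, 216])]) (.node (.node
  (.leaf [9212, 5638, 3084] [(8, [1148, 704, 385])]) (.node
  (.leaf [65528, 17404, 11778, 6400] [(10, [12280, 6204, 3296, 1664])])
  (.leaf [34808, 31748, 9729, 4352] [(11, [32767, 8700, 4866, 2560])]))) (.node (.node
  (.leaf [65528, 17404, 11778, 6401] [(9, [4344, 3980, 1472, 768])])
  (.leaf [34808, 31772, 11776, 6144] [(11, [32767, 8700, 4866, 2561])])) (.node
  (.leaf [34808, 31756, 11776, 6145] [(10, [16383, 4348, 2432, 1280])]) (.node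
  (.leaf [69624, 47104, 25602, 13314] [(11, [17400, 15872, 5888, 3072])]) (.node (.node
  (.leaf [278520, 188444, 102418, 53256] [(12, [131071, 36856, 22556, 12290, 4098])])
  (.leaf [1048575, 294904, 180252, 98322, 32784] [(14, [524287, 147448, 90140, 49200, 16393])]))
  (.node
  (.leaf [1048575, 294904, 180252, 98322, 32785] [(10, [16383, 4348, 2432, 1280]), (3, [22, 12])])
  (.leaf [675840, 262160, 255172, 66968, 50208] [(14, [524287, 147448, 90124, 49160, 16392])])))))))))
  (.node (.node (.leaf [2556, 1806, 904] [(6, [316, 230, 112])]) (.node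
  (.leaf [4604, 2822, 1540] [(8, [1084, 736, 401])]) (.node (.node
  (.leaf [65528, 17404, 11778, 6402] [(9, [4344, 3996, 1474, 768])])
  (.leaf [34808, 31804, 11776, 6144] [(11, [32767, 8700, 4866, 2562])])) (.node
  (.leaf [34808, 31756, 11776, 6148] [(10, [8696, 7940, 2944, 1536])]) (.node
  (.leaf [69624, 47132, 25602, 13312] [(11, [20472, 10244, 6268, 3072])]) (.node
  (.leaf [133112, 80896, 58880, 28672] [(12, [131071, 36856, 22556, 12304, 4097])]) (.node
  (.leaf [1048575, 294904, 180236, 98328, 32816] [(10, [8696, 7940, 2944, 1536]), (3, [22, 12])])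
  (.leaf [524368, 438848, 251712, 65856, 34818] [(3, [22, 12]), (11, [16888, 8960, 5632, 3073])]))))))))
  (.node (.leaf [2300, 1410, 770] [(7, [2047, 764, 390, 132])]) (.node (.node (.node
  (.leaf [65528, 17404, 11782, 6403] [(8, [2168, 1996, 736, 384])])
  (.leaf [34808, 31804, 11778, 6144] [(11, [32767, 8700, 4870, 2563])])) (.node
  (.leaf [34808, 31744, 11806, 6160] [(10, [16383, 4348, 2434, 1281])]) (.node
  (.leaf [69624, 63516, 23552, 12296] [(11, [17400, 15900, 5888, 3072])]) (.node
  (.leaf [133112, 72704, 62979, 18688] [(12, [131071, 36856, 22540, 12312, 4100])]) (.node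
  (.leaf [1048575, 294904, 180252, 98352, 32808] [(10, [16383, 4348, 2434, 1281]), (3, [22, 12])])
  (.leaf [868864, 280064, 139264, 82954, 41950] [(3, [22, 12]), (11, [18424, 9220, 5124, 3076])]))))))
  (.node (.node (.leaf [34808, 31756, 11784, 6156] [(9, [8191, 2172, 1216, 640])])
  (.leaf [33784, 19972, 14341, 5120] [(11, [17400, 15884, 5888, 3073])])) (.node
  (.leaf [40952, 20540, 12322, 6176] [(10, [8696, 7936, 2944, 1536])]) (.node
  (.leaf [66552, 40448, 29440, 14336] [(11, [65535, 18424, 11292, 6146, 2050])]) (.node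
  (.leaf [132088, 73220, 45060, 24578] [(10, [8696, 7936, 2944, 1536]), (2, [15, 6])]) (.node
  (.leaf [863232, 328000, 165920, 70248, 34051] [(13, [262143, 73720, 45068, 24584, 8200])])
  (.leaf [885536, 271876, 131346, 83478, 32832] [(10, [8696, 7936, 2944, 1536]), (4, [127, 38, 20])]))))))))))
  (.node (.node (.node (.leaf [2556, 1806, 905] [(5, [156, 112, 56])])
  (.leaf [2300, 1414, 768] [(8, [1276, 902, 452])])) (.node
  (.leaf [2300, 1414, 769] [(7, [2047, 764, 390, 133])]) (.node (.node (.node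
  (.leaf [65528, 17404, 11782, 6405] [(8, [1148, 706, 384])])
  (.leaf [34808, 31868, 11778, 6144] [(11, [32767, 8700, 4870, 2565])])) (.node
  (.leaf [49144, 24828, 13184, 6656] [(10, [16383, 4348, 2434, 1282])]) (.node
  (.leaf [81912, 40988, 24688, 12352] [(11, [17400, 15932, 5888, 3072])])
  (.leaf [67576, 35840, 31235, 9216] [(12, [131071, 33784, 24068, 13056, 4224])])))) (.node
  (.node (.leaf [36856, 30720, 11270, 6396] [(9, [4344, 3972, 1472, 768])]) (.node
  (.leaf [69624, 63516, 23568, 12296] [(11, [17400, 15884, 5888, 3076])])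
  (.leaf [67576, 39940, 28672, 14336] [(12, [131071, 36856, 22588, 12322, 4098])]))) (.node
  (.leaf [34808, 23580, 12802, 6656] [(10, [10232, 5124, 3134, 1536])])
  (.leaf [33784, 19968, 14336, 7168] [(11, [65535, 18424, 11292, 6160, 2049])])))))) (.node
  (.node (.leaf [2300, 1414, 771] [(6, [1023, 380, 194, 66])]) (.node (.node (.node
  (.leaf [65528, 17404, 11790, 6403] [(8, [1148, 706, 385])])
  (.leaf [34808, 31756, 11800, 6144] [(11, [32767, 8700, 4878, 2563])])) (.node
  (.leaf [34808, 31868, 11778, 6146] [(10, [16383, 4348, 2438, 1281])])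
  (.leaf [33784, 19972, 11008, 6144] [(11, [20472, 10300, 6242, 3072])]))) (.node (.node
  (.leaf [49144, 24828, 13184, 6657] [(9, [8191, 2172, 1218, 640])]) (.node
  (.leaf [81912, 41212, 24962, 12290] [(11, [17400, 15932, 5888, 3073])]) (.node
  (.leaf [135160, 79876, 44036, 24580] [(12, [131071, 40952, 20604, 12480, 4224])]) (.node
  (.leaf [1048575, 266232, 194572, 99330, 33793] [(10, [10232, 5148, 3120, 1536]), (3, [29, 12])])
  (.leaf [655360, 458109, 139784, 65704, 52233] [(14, [524287, 133112, 97284, 49664, 16896])])))))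
  (.node (.leaf [40952, 20604, 12480, 6145] [(10, [10232, 5148, 3120, 1536])]) (.node
  (.leaf [81912, 41020, 24672, 12352] [(11, [65535, 18424, 11324, 6146, 2050])]) (.node (.node
  (.leaf [270328, 159756, 88072, 49161] [(10, [10232, 5148, 3120, 1536]), (2, [15, 6])])
  (.leaf [607264, 287112, 240144, 82457, 33024] [(14, [524287, 133112, 97284, 49666, 16897])]))
  (.node
  (.leaf [1048575, 266232, 145420, 122880, 36865] [(13, [262143, 66552, 48640, 24832, 8448])])
  (.leaf [797840, 448796, 168978, 65824, 33024] [(10, [10232, 5148, 3120, 1536]), (4, [127, 38, 20])]))))))))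
  (.node (.node (.node (.node (.leaf [65528, 17404, 11790, 6407] [(7, [572, 352, 192])])
  (.leaf [34808, 31868, 11782, 6144] [(11, [32767, 8700, 4878, 2567])])) (.node
  (.leaf [49144, 24828, 13186, 6656] [(10, [16383, 4348, 2438, 1283])]) (.node
  (.leaf [69624, 38972, 29698, 14336] [(11, [17400, 15932, 5890, 3072])])
  (.leaf [66552, 36412, 22528, 12288] [(12, [131071, 36856, 22556, 12336, 4104])])))) (.node
  (.node (.leaf [49144, 24828, 13186, 6657] [(9, [8191, 2172, 1218, 641])]) (.node
  (.leaf [69624, 63548, 23584, 12289] [(11, [24568, 12412, 6592, 3328])]) (.node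
  (.leaf [163832, 81932, 49402, 24704] [(12, [131071, 36856, 22556, 12338, 4104])]) (.node
  (.leaf [1048575, 294904, 180284, 98400, 32848] [(13, [262143, 66552, 36352, 30722, 9216])])
  (.leaf [1015532, 278536, 236242, 66056, 50176] [(10, [8696, 7964, 2944, 1536]), (4, [38, 20])])))))
  (.node (.leaf [34808, 31772, 11776, 6152] [(10, [8696, 7964, 2944, 1536])])
  (.leaf [33272, 18204, 11264, 6144] [(11, [65535, 18424, 11276, 6168, 2052])])))) (.node (.node
  (.node (.leaf [49144, 24700, 13248, 6689] [(8, [4095, 1084, 608, 320])])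
  (.leaf [34808, 31772, 11792, 6144] [(11, [20472, 14348, 5240, 3264])])) (.node
  (.leaf [34808, 31748, 11788, 6145] [(10, [8696, 7948, 2944, 1537])])
  (.leaf [33784, 19972, 14336, 7168] [(11, [65535, 20472, 10300, 6240, 2112])]))) (.node (.node
  (.leaf [34808, 31756, 11784, 6149] [(9, [4344, 3968, 1472, 768])])
  (.leaf [40952, 20480, 12318, 6192] [(11, [20472, 10300, 6240, 3073])])) (.node
  (.leaf [33784, 19972, 14338, 7169] [(10, [32767, 9208, 5660, 3074, 1026])]) (.node (.node
  (.leaf [139256, 94220, 51224, 26640] [(11, [16888, 9984, 7168, 3584])]) (.node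
  (.leaf [262648, 147200, 90112, 49345] [(13, [262143, 73720, 45084, 24594, 8209])])
  (.leaf [657416, 457723, 145664, 98526, 40960] [(2, [15, 5]), (12, [40952, 20480, 12318, 6192])])))
  (.node (.node
  (.leaf [270328, 159748, 114702, 57352] [(12, [131071, 36856, 22540, 12296, 4104])])
  (.leaf [1031720, 272514, 142902, 65568, 35712] [(14, [524287, 133112, 72716, 61440, 18433])]))
  (.node
  (.leaf [525376, 310304, 170084, 102471, 51201] [(2, [15, 5]), (11, [16888, 9984, 7168, 3584])])
  (.leaf [264184, 146432, 90112, 49152] [(7, [572, 352, 192]), (7, [572, 352, 192])]))))))))))))))))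

theorem check_residueTree : residueTree.check 0 0 = true := by decide +kernel

/-! ### Adding points to a finite space -/

/-- The topology on `α` with one more point `none`, whose open neighbourhoods are the open sets that
contain `D`. -/
@[reducible] def addPoint {α : Type} (t : TopologicalSpace α) (D : Set α) : TopologicalSpace (Option α) where
  IsOpen S := t.IsOpen (some ⁻¹' S) ∧ (none ∈ S → D ⊆ some ⁻¹' S)
  isOpen_univ := ⟨t.isOpen_univ, fun _ => Set.subset_univ _⟩
  isOpen_inter S T hS hT :=
    ⟨t.isOpen_inter _ _ hS.1 hT.1, fun h => Set.subset_inter (hS.2 h.1) (hT.2 h.2)⟩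
  isOpen_sUnion 𝒮 h := by
    refine ⟨?_, ?_⟩
    · rw [Set.preimage_sUnion]
      exact @isOpen_biUnion _ _ t _ _ fun S hS => (h S hS).1
    · rintro ⟨S, hS, hn⟩ x hx
      exact ⟨S, hS, (h S hS).2 hn hx⟩

/-- The number of open sets containing `E`. -/
noncomputable def countAbove {α : Type} (t : TopologicalSpace α) (E : Set α) : ℕ :=
  {S : Set α | t.IsOpen S ∧ E ⊆ S}.ncard

theorem some_injective_image (α : Type) :
    Function.Injective (fun S : Set α => (some '' S : Set (Option α))) :=
  Set.image_injective.2 (Option.some_injective α)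

theorem insert_none_injective (α : Type) :
    Function.Injective (fun S : Set α => (insert none (some '' S) : Set (Option α))) := by
  intro S T h
  ext x
  have := congrArg (fun U : Set (Option α) => some x ∈ U) h
  simpa using this

theorem preimage_insert_none {α : Type} (S : Set α) :
    (some ⁻¹' (insert none (some '' S)) : Set α) = S := by
  ext x; simp

theorem preimage_some_image {α : Type} (S : Set α) : (some ⁻¹' (some '' S) : Set α) = S := by
  ext x; simp

theorem countAbove_addPoint_insert {α : Type} (t : TopologicalSpace α) (D E : Set α) :
    countAbove (addPoint t D) (insert none (some '' E)) = countAbove t (E ∪ D) := by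
  unfold countAbove
  rw [← Set.ncard_image_of_injective _ (insert_none_injective α)]
  congr 1
  ext S
  constructor
  · rintro ⟨⟨h1, h2⟩, h3⟩
    have hn : none ∈ S := h3 (Set.mem_insert _ _)
    refine ⟨some ⁻¹' S, ⟨h1, Set.union_subset ?_ (h2 hn)⟩, ?_⟩
    · intro x hx
      exact h3 (Set.mem_insert_of_mem _ ⟨x, hx, rfl⟩)
    · ext x
      cases x <;> simp [hn]
  · rintro ⟨U, ⟨h1, h2⟩, rfl⟩
    refine ⟨⟨?_, fun _ => ?_⟩, ?_⟩
    · simpa only [preimage_insert_none] using h1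
    · simpa only [preimage_insert_none] using Set.subset_union_right.trans h2
    · exact Set.insert_subset_insert (Set.image_mono (Set.subset_union_left.trans h2))

theorem countAbove_addPoint_image {α : Type} [Finite α] (t : TopologicalSpace α) (D E : Set α) :
    countAbove (addPoint t D) (some '' E) = countAbove t E + countAbove t (E ∪ D) := by
  rw [← countAbove_addPoint_insert]
  unfold countAbove
  rw [← Set.ncard_image_of_injective _ (some_injective_image α),
    ← Set.ncard_union_eq _ (Set.toFinite _) (Set.toFinite _)]
  · congr 1
    ext S
    constructor
    · rintro ⟨h1, h3⟩
      by_cases hn : none ∈ S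
      · exact Or.inr ⟨h1, Set.insert_subset hn h3⟩
      · refine Or.inl ⟨some ⁻¹' S, ⟨h1.1, Set.image_subset_iff.1 h3⟩, ?_⟩
        ext x
        cases x <;> simp [hn]
    · rintro (⟨U, ⟨h1, h2⟩, rfl⟩ | ⟨h1, h2⟩)
      · refine ⟨⟨?_, fun h => ?_⟩, Set.image_mono h2⟩
        · simpa only [preimage_some_image] using h1
        · simp at h
      · exact ⟨h1, (Set.subset_insert _ _).trans h2⟩
  · rw [Set.disjoint_left]
    rintro _ ⟨U, -, rfl⟩ ⟨-, h⟩
    have : none ∈ some '' U := h (Set.mem_insert _ _)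
    simp at this

/-! ### Spaces described by lists of masks -/

theorem cond_beq (a b x y : ℕ) :
    (bif Nat.beq a b then x else y) = if a = b then x else y := by
  by_cases h : a = b
  · simp [h]
  · have : Nat.beq a b = false := by
      rw [← Bool.not_eq_true, Nat.beq_eq]; exact h
    simp [h, this]

theorem openCount_nil (q D : ℕ) : openCount q [] D = if D % 2 = 1 then 1 else q := by
  by_cases h : D % 2 = 1 <;> simp [openCount, cond_beq, h]

theorem openCount_cons (q d : ℕ) (w : List ℕ) (D : ℕ) :
    openCount q (d :: w) D = if D % 2 = 1 then openCount q w (D / 2 ||| d)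
      else openCount q w (D / 2) + openCount q w (D / 2 ||| d) := by
  rcases D with _ | n
  · by_cases hd : d = 0
    · subst hd
      simp [openCount, two_mul]
    · simp [openCount, cond_beq, hd]
  · by_cases h : (n + 1) % 2 = 1
    · simp [openCount, cond_beq, h]
    · by_cases hd : d = 0
      · subst hd
        simp [openCount, cond_beq, h, two_mul]
      · simp [openCount, cond_beq, h, hd]

theorem or_mod_two (D E : ℕ) : (D ||| E) % 2 = 1 ↔ D % 2 = 1 ∨ E % 2 = 1 := by
  simp

/-- The correctness of `openCount`; `φ` sends a mask to the set it names. -/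
theorem exists_space_of_list {α : Type} [Finite α] (t : TopologicalSpace α) (w : List ℕ) :
    ∃ (β : Type) (_ : Finite β) (t' : TopologicalSpace β) (φ : ℕ → Set β),
      Nat.card β = Nat.card α + w.length ∧ (∀ D E, φ (D ||| E) = φ D ∪ φ E) ∧ φ 0 = ∅ ∧
      ∀ D, countAbove t' (φ D) = openCount (countAbove t ∅) w D := by
  induction w with
  | nil =>
    refine ⟨α, inferInstance, t, fun D => {_x | D % 2 = 1}, by simp, ?_, by simp, ?_⟩
    · intro D E
      ext x
      exact or_mod_two D E
    · intro D
      rw [openCount_nil]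
      by_cases h : D % 2 = 1
      · have : {S : Set α | t.IsOpen S ∧ Set.univ ⊆ S} = {Set.univ} := by
          ext S
          simp only [Set.univ_subset_iff, Set.mem_ofPred_eq, Set.mem_singleton_iff]
          exact ⟨fun h => h.2, fun h => ⟨h ▸ t.isOpen_univ, h⟩⟩
        have e : ({_x | D % 2 = 1} : Set α) = Set.univ := by
          ext x; simp [h]
        simp only [e, if_pos h]
        rw [countAbove, this, Set.ncard_singleton]
      · simp [h]
  | cons d w ih =>
    obtain ⟨β, _, t', φ, hcard, hor, h0, hcount⟩ := ih
    have key (D : ℕ) (h : D % 2 = 1) :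
        ({x | (x = none ∧ D % 2 = 1) ∨ ∃ a ∈ φ (D / 2), some a = x} : Set (Option β)) =
          insert none (some '' φ (D / 2)) := by
      ext x; simp [h]
    have key' (D : ℕ) (h : ¬ D % 2 = 1) :
        ({x | (x = none ∧ D % 2 = 1) ∨ ∃ a ∈ φ (D / 2), some a = x} : Set (Option β)) =
          some '' φ (D / 2) := by
      ext x; simp [h]
    refine ⟨Option β, inferInstance, addPoint t' (φ d),
      fun D => {x | (x = none ∧ D % 2 = 1) ∨ ∃ a ∈ φ (D / 2), some a = x}, ?_, ?_, ?_, ?_⟩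
    · rw [Finite.card_option, hcard, List.length_cons, add_assoc]
    · intro D E
      ext x
      have hdiv : (D ||| E) / 2 = D / 2 ||| E / 2 := Nat.or_div_two
      simp only [Set.mem_ofPred_eq, Set.mem_union, or_mod_two, hdiv, hor]
      grind
    · simp [h0]
    · intro D
      rw [openCount_cons]
      by_cases h : D % 2 = 1
      · simp only [key D h, if_pos h]
        rw [countAbove_addPoint_insert, ← hor, hcount]
      · simp only [key' D h, if_neg h]
        rw [countAbove_addPoint_image, ← hor, hcount, hcount]

/-- Some space with at most `n` points has exactly `k` open sets. -/
def Realizable (n k : ℕ) : Prop :=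
  ∃ (α : Type) (_ : Finite α) (t : TopologicalSpace α), Nat.card α ≤ n ∧ countAbove t ∅ = k

theorem Realizable.mono {m n k : ℕ} (h : Realizable m k) (hmn : m ≤ n) : Realizable n k := by
  obtain ⟨α, h1, t, h2, h3⟩ := h
  exact ⟨α, h1, t, h2.trans hmn, h3⟩

theorem realizable_one (n : ℕ) : Realizable n 1 := by
  refine ⟨Empty, inferInstance, ⊥, by simp, ?_⟩
  have : {S : Set Empty | (⊥ : TopologicalSpace Empty).IsOpen S ∧ ∅ ⊆ S} = {∅} := by
    ext S
    simp only [Set.mem_ofPred_eq, Set.mem_singleton_iff]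
    exact ⟨fun _ => Set.eq_empty_of_isEmpty S, fun _ => ⟨trivial, Set.empty_subset _⟩⟩
  rw [countAbove, this, Set.ncard_singleton]

theorem Realizable.extend {n q : ℕ} (h : Realizable n q) (w : List ℕ) :
    Realizable (n + w.length) (openCount q w 0) := by
  obtain ⟨α, _, t, hn, rfl⟩ := h
  obtain ⟨β, hβ, t', φ, hcard, -, h0, hcount⟩ := exists_space_of_list t w
  exact ⟨β, hβ, t', by omega, by rw [← hcount, h0]⟩

theorem realizable_tower (b : List (ℕ × List ℕ)) : Realizable (towerSize b) (towerCount b) := by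
  induction b with
  | nil => exact realizable_one 0
  | cons x b ih => exact ih.extend _

/-- Surplus points are absorbed by pulling the topology back along a surjection. -/
theorem Realizable.exists_fin {n k : ℕ} (h : Realizable n k) (hk : 2 ≤ k) :
    ∃ t : TopologicalSpace (Fin n), Nat.card {s : Set (Fin n) // t.IsOpen s} = k := by
  obtain ⟨α, _, t, hn, hc⟩ := h
  have hne : Nonempty α := by
    by_contra hne
    rw [not_nonempty_iff] at hne
    have : countAbove t ∅ ≤ 1 := by
      rw [countAbove, Set.ncard_le_one (Set.toFinite _)]
      intro S _ T _
      exact Subsingleton.elim S T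
    omega
  obtain ⟨f, hf⟩ : ∃ f : Fin n → α, Function.Surjective f := by
    have e : α ≃ Fin (Nat.card α) := Finite.equivFin α
    let g : α → Fin n := fun a => Fin.castLE hn (e a)
    have hg : Function.Injective g := (Fin.castLE_injective hn).comp e.injective
    exact ⟨Function.invFun g, Function.invFun_surjective hg⟩
  refine ⟨TopologicalSpace.induced f t, ?_⟩
  have himg : {s : Set (Fin n) | (TopologicalSpace.induced f t).IsOpen s} =
      (fun S => f ⁻¹' S) '' {S : Set α | t.IsOpen S ∧ ∅ ⊆ S} := by
    ext s
    constructor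
    · rintro ⟨u, hu, rfl⟩
      exact ⟨u, ⟨hu, Set.empty_subset _⟩, rfl⟩
    · rintro ⟨u, ⟨hu, -⟩, rfl⟩
      exact ⟨u, hu, rfl⟩
  have : {s : Set (Fin n) | (TopologicalSpace.induced f t).IsOpen s}.ncard = k := by
    rw [himg, Set.ncard_image_of_injective _ hf.preimage_injective]
    exact hc
  exact this

/-! ### The induction -/

theorem exists_openCount_eq_add_mul (w : List ℕ) (D : ℕ) :
    ∃ c, ∀ q, openCount q w D = openCount 0 w D + q * c := by
  induction w generalizing D with
  | nil =>
    by_cases h : D % 2 = 1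
    · exact ⟨0, fun q => by simp [openCount_nil, h]⟩
    · exact ⟨1, fun q => by simp [openCount_nil, h]⟩
  | cons d w ih =>
    obtain ⟨c₁, h₁⟩ := ih (D / 2)
    obtain ⟨c₂, h₂⟩ := ih (D / 2 ||| d)
    by_cases h : D % 2 = 1
    · exact ⟨c₂, fun q => by simp only [openCount_cons, if_pos h, h₂ q]⟩
    · refine ⟨c₁ + c₂, fun q => ?_⟩
      simp only [openCount_cons, if_neg h]
      rw [h₁ q, h₂ q]
      ring

/-- The induction step for `k = 2 ^ j * q + r`, for a residue class `r` modulo `2 ^ j` with a valid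
covering. -/
theorem realizable_of_check (T : ResidueTree) (j r : ℕ) (hT : T.check j r = true) (q n : ℕ)
    (hn : 2 ≤ n) (hpos : 1 ≤ 2 ^ j * q + r) (hk : (2 ^ j * q + r) ^ 4 ≤ 2 ^ (3 * (n - 2)))
    (ih : ∀ k < 2 ^ j * q + r, 1 ≤ k → ∀ m, 2 ≤ m → k ^ 4 ≤ 2 ^ (3 * (m - 2)) →
      Realizable m k) :
    Realizable n (2 ^ j * q + r) := by
  induction T generalizing j r q with
  | node t₀ t₁ ih₀ ih₁ =>
    rw [ResidueTree.check, Bool.and_eq_true] at hT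
    rcases Nat.even_or_odd' q with ⟨q', rfl | rfl⟩
    · have e : 2 ^ j * (2 * q') + r = 2 ^ (j + 1) * q' + r := by ring
      rw [e] at hpos hk ih ⊢
      exact ih₀ _ _ hT.1 _ hpos hk ih
    · have e : 2 ^ j * (2 * q' + 1) + r = 2 ^ (j + 1) * q' + (r + 2 ^ j) := by ring
      rw [e] at hpos hk ih ⊢
      exact ih₁ _ _ hT.2 _ hpos hk ih
  | leaf ys b =>
    simp only [ResidueTree.check, Bool.and_eq_true, Bool.or_eq_true, Nat.ble_eq,
      Nat.beq_eq] at hT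
    obtain ⟨⟨⟨⟨hj, hlen⟩, hzero⟩, hone⟩, hbase⟩ := hT
    rcases Nat.eq_zero_or_pos q with rfl | hq
    · simp only [mul_zero, zero_add] at hpos hk ⊢
      rcases hbase with h | ⟨h1, h2⟩
      · obtain rfl : r = 1 := by omega
        exact realizable_one n
      · have h3 : 2 ^ (3 * (towerSize b - 3)) < 2 ^ (3 * (n - 2)) := by omega
        have h4 := (Nat.pow_lt_pow_iff_right (by norm_num : 1 < 2)).1 h3
        rw [← h1]
        exact (realizable_tower b).mono (by omega)
    · set w := extension j ys with hw
      have hval : openCount q w 0 = 2 ^ j * q + r := by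
        obtain ⟨c, hc⟩ := exists_openCount_eq_add_mul w 0
        have h1 := hc 1
        have hcj : c = 2 ^ j := by omega
        rw [hc q, hzero, hcj]
        ring
      -- The size condition on the extension turns the bound for `k` into the one for `q`.
      have hmul : 2 ^ (3 * w.length) * q ^ 4 ≤ 2 ^ (3 * (n - 2)) :=
        calc 2 ^ (3 * w.length) * q ^ 4 ≤ 2 ^ (4 * j) * q ^ 4 :=
              Nat.mul_le_mul_right _ (Nat.pow_le_pow_right (by norm_num) hlen)
          _ = (2 ^ j * q) ^ 4 := by rw [mul_pow, ← pow_mul, mul_comm j 4]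
          _ ≤ (2 ^ j * q + r) ^ 4 := Nat.pow_le_pow_left (Nat.le_add_right _ _) 4
          _ ≤ _ := hk
      have hle : w.length ≤ n - 2 := by
        have h1 : 2 ^ (3 * w.length) ≤ 2 ^ (3 * (n - 2)) :=
          (Nat.le_mul_of_pos_right _ (by positivity)).trans hmul
        have := (Nat.pow_le_pow_iff_right (by norm_num : 1 < 2)).1 h1
        omega
      have hq4 : q ^ 4 ≤ 2 ^ (3 * (n - w.length - 2)) := by
        have e : 2 ^ (3 * (n - 2)) = 2 ^ (3 * w.length) * 2 ^ (3 * (n - w.length - 2)) := by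
          rw [← pow_add]
          congr 1
          omega
        rw [e] at hmul
        exact Nat.le_of_mul_le_mul_left hmul (by positivity)
      have hlt : q < 2 ^ j * q + r := by
        have h2 : 2 ^ 1 ≤ 2 ^ j := Nat.pow_le_pow_right (by norm_num) hj
        nlinarith
      have := (ih q hlt hq (n - w.length) (by omega) hq4).extend w
      rwa [hval, Nat.sub_add_cancel (by omega)] at this

theorem realizable_of_pow_le (k : ℕ) :
    1 ≤ k → ∀ n, 2 ≤ n → k ^ 4 ≤ 2 ^ (3 * (n - 2)) → Realizable n k := by
  induction k using Nat.strong_induction_on with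
  | _ k ih =>
    intro hk n hn hkn
    have := realizable_of_check residueTree 0 0 check_residueTree k n hn (by simpa using hk)
      (by simpa using hkn) (by simpa using ih)
    simpa using this

/-- For all integers `n ≥ 2` and `k` with `2 ≤ k` and `k ^ 4 ≤ 2 ^ (3 * (n - 2))`,
there exists a topology on a set of `n` points having exactly `k` open sets. -/
theorem T_pos_of_le_two_pow (n k : ℕ) (hn : 2 ≤ n) (hk : 2 ≤ k)
    (hkn : k ^ 4 ≤ 2 ^ (3 * (n - 2))) :
    ∃ t : TopologicalSpace (Fin n), Nat.card {s : Set (Fin n) // t.IsOpen s} = k :=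
  (realizable_of_pow_le k (by omega) n hn hkn).exists_fin hk
end

section
/- For every integer k ≥ 2, there exists a natural number n with n ≤ 2·⌊log₂ k⌋ and a topological space on a set of n points having exactly k open sets. (Equivalently, m(k) ≤ 2·⌊log₂ k⌋.) -/
/-!
Read the binary expansion of `k` from the top digit, starting with the empty space, which has one
open set. Adding an isolated point doubles the number of open sets
(`HasOpens.double`), and adding a point whose only neighbourhood is the whole space increases it
by one (`HasOpens.succ`). Each binary digit after the leading one thus costs at most two points,
and there are `⌊log₂ k⌋` such digits.
-/

/-- Some space with exactly `n` points has exactly `k` open sets. The carrier is an arbitrary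
finite type, so that points can be added by type constructions. -/
def HasOpens (n k : ℕ) : Prop :=
  ∃ (α : Type) (_ : Finite α) (t : TopologicalSpace α),
    Nat.card α = n ∧ Nat.card {s : Set α // t.IsOpen s} = k

theorem HasOpens.one : HasOpens 0 1 := by
  refine ⟨Empty, inferInstance, inferInstance, by simp, ?_⟩
  rw [Nat.card_eq_one_iff_unique]
  exact ⟨inferInstance, ⟨⟨Set.univ, TopologicalSpace.isOpen_univ⟩⟩⟩

/-- Adding an isolated point: an open set of the disjoint union with a point is an open set of the
old space together with the choice of whether it contains the new point. -/
theorem HasOpens.double {n k : ℕ} (h : HasOpens n k) : HasOpens (n + 1) (2 * k) := by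
  obtain ⟨α, _, t, hn, hk⟩ := h
  refine ⟨α ⊕ Unit, inferInstance, inferInstance, by simp [Nat.card_sum, hn], ?_⟩
  let e : {s : Set (α ⊕ Unit) // IsOpen s} ≃ Set Unit × {s : Set α // IsOpen s} :=
    { toFun := fun s => (Sum.inr ⁻¹' s.1, ⟨Sum.inl ⁻¹' s.1, (isOpen_sum_iff.1 s.2).1⟩)
      invFun := fun p => ⟨Sum.elim p.2.1 p.1, isOpen_sum_iff.2 ⟨p.2.2, isOpen_discrete p.1⟩⟩
      left_inv := by
        rintro ⟨s, hs⟩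
        apply Subtype.ext
        funext x
        cases x <;> rfl
      right_inv := fun _ => rfl }
  have h2 : Nat.card (Set Unit) = 2 := by simp
  exact (Nat.card_congr e).trans (by rw [Nat.card_prod, h2]; exact congrArg (2 * ·) hk)

/-- Adding a point, `none`, whose only neighbourhood is the whole space. -/
theorem HasOpens.succ {n k : ℕ} (h : HasOpens n k) : HasOpens (n + 1) (k + 1) := by
  classical
  obtain ⟨α, _, t, hn, hk⟩ := h
  let t' : TopologicalSpace (Option α) :=
    { IsOpen := fun s => (none ∈ s → s = Set.univ) ∧ IsOpen (some ⁻¹' s)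
      isOpen_univ := by simp
      isOpen_inter := by
        rintro s u ⟨h1, h2⟩ ⟨h3, h4⟩
        refine ⟨fun h => ?_, h2.inter h4⟩
        rw [h1 h.1, h3 h.2, Set.univ_inter]
      isOpen_sUnion := by
        intro S hS
        refine ⟨?_, ?_⟩
        · rintro ⟨s, hs, hx⟩
          exact Set.eq_univ_of_univ_subset
            ((hS s hs).1 hx ▸ Set.subset_sUnion_of_mem hs)
        · rw [Set.preimage_sUnion]
          exact isOpen_biUnion fun s hs => (hS s hs).2 }
  refine ⟨Option α, inferInstance, t', by simp [hn], ?_⟩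
  let e : Option {s : Set α // t.IsOpen s} ≃ {s : Set (Option α) // t'.IsOpen s} :=
    { toFun := fun o => o.elim ⟨Set.univ, t'.isOpen_univ⟩ fun s =>
        ⟨some '' s.1, by simp, by
          rw [Set.preimage_image_eq _ (Option.some_injective α)]; exact s.2⟩
      invFun := fun s => if none ∈ s.1 then none else some ⟨some ⁻¹' s.1, s.2.2⟩
      left_inv := by
        rintro (_ | ⟨s, hs⟩)
        · simp
        · simp [Set.preimage_image_eq _ (Option.some_injective α)]
      right_inv := by
        rintro ⟨s, hs⟩
        apply Subtype.ext
        by_cases hx : none ∈ s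
        · simp [hs.1 hx]
        · ext (_ | x) <;> simp [hx] }
  rw [← Nat.card_congr e, Finite.card_option, hk]

theorem exists_hasOpens (k : ℕ) (hk : 1 ≤ k) : ∃ n, n ≤ 2 * Nat.log 2 k ∧ HasOpens n k := by
  induction k using Nat.strong_induction_on with
  | _ k ih =>
    obtain rfl | hk2 : k = 1 ∨ 2 ≤ k := by omega
    · exact ⟨0, by simp, HasOpens.one⟩
    obtain ⟨n, hn, h⟩ := ih (k / 2) (by omega) (by omega)
    have hlog : Nat.log 2 k = Nat.log 2 (k / 2) + 1 := Nat.log_of_one_lt_of_le (by norm_num) hk2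
    obtain hpar | hpar : k = 2 * (k / 2) ∨ k = 2 * (k / 2) + 1 := by omega
    · exact ⟨n + 1, by omega, hpar ▸ h.double⟩
    · exact ⟨n + 1 + 1, by omega, hpar ▸ h.double.succ⟩

/-- For every integer `k ≥ 2`, there exists a natural number `n ≤ 2 * ⌊log₂ k⌋`
and a topology on a set of `n` points having exactly `k` open sets. -/
theorem m_le_two_log (k : ℕ) (hk : 2 ≤ k) :
    ∃ n : ℕ, n ≤ 2 * Nat.log 2 k ∧
      ∃ t : TopologicalSpace (Fin n), Nat.card {s : Set (Fin n) // t.IsOpen s} = k := by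
  obtain ⟨n, hn, α, _, t, hα, hcard⟩ := exists_hasOpens k (by omega)
  let e : α ≃ Fin n := Finite.equivFinOfCardEq hα
  refine ⟨n, hn, t.coinduced e, ?_⟩
  rw [← hcard]
  refine Nat.card_congr ((Equiv.Set.congr e.symm).subtypeEquiv fun s => ?_)
  change t.IsOpen (e ⁻¹' s) ↔ t.IsOpen (e.symm '' s)
  rw [e.symm.image_eq_preimage_symm, e.symm_symm]
end

section
/- For all integers n ≥ 1 and k with 2 ≤ k and k³ ≤ 2^{2(n−1)}, there exists a topological space on a set of n points having exactly k open sets. (Equivalently, T(n,k) > 0 for all k in [2, 2^{2(n−1)/3}], i.e., f(n) > 2^{2(n−1)/3}.) -/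
/-!
The proof builds spaces out of *gadgets*. A gadget is a finite space `Y` with a marked subset `A`;
let `M` be the number of open sets contained in `A` and `s` the number of the other open sets.
Stacking `Y` on a space `X` with `j` open sets, by declaring `U ⊔ V` open when `U` and `V` are open
and either `V ⊆ A` or `U = X`, gives a space with `M * j + s` open sets, so a gadget acts as the
affine map `j ↦ M * j + s`. One-point gadgets give `j ↦ 2 * j` and `j ↦ j + 1`. Gadgets can be
composed (`Gadget.comp`), and their disjoint union (`Gadget.prod`) has parameters
`(M * M', (M + s) * (M' + s') - M * M')`; the number of points is additive in both cases.

A gadget with `q` points is affordable when `4 ^ q ≤ M ^ 3`: if `k = M * j + s` with `j ≥ 1` and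
`k ^ 3 ≤ 4 ^ m`, then `j ^ 3 ≤ 4 ^ (m - q)`, so strong induction on `k` applies (`Fits.step`).
Compositions of the one-point gadgets settle the residues `0, 1, 2` modulo `4`, and products and
compositions of these settle everything else: `3, 7, 11` modulo `16`, then `15, 31, 47` modulo `64`,
then `127` modulo `128` and `63, 191` modulo `256`. For instance, `127` comes from
`(2 + 1) * (4 + 1) * (16 + 1) = 128 + 127`. The finitely many `k` with `j = 0` are built by hand.
Finally, a space with fewer than `n` points is padded to `n` points by pulling its topology back
along a surjection, which does not change the number of open sets.
-/

/-- `Gadget p M s`: there are a topological space with `p` points and a subset `A` of it such that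
exactly `M` open sets are contained in `A` and exactly `s` open sets are not. -/
def Gadget (p M s : ℕ) : Prop :=
  ∃ (X : Type) (_ : Finite X) (_ : TopologicalSpace X) (A : Set X), Nat.card X = p ∧
    {U : Set X | IsOpen U ∧ U ⊆ A}.ncard = M ∧ {U : Set X | IsOpen U ∧ ¬ U ⊆ A}.ncard = s

/-- `Space p k`: some topology on `p` points has exactly `k` open sets. -/
def Space (p k : ℕ) : Prop :=
  ∃ (X : Type) (_ : Finite X) (_ : TopologicalSpace X), Nat.card X = p ∧
    {U : Set X | IsOpen U}.ncard = k

/-! ### Operations on gadgets -/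

lemma ncard_sum_sets {X Y : Type} (P : Set X → Set Y → Prop) :
    {W : Set (X ⊕ Y) | P (Sum.inl ⁻¹' W) (Sum.inr ⁻¹' W)}.ncard =
      {q : Set X × Set Y | P q.1 q.2}.ncard := by
  rw [← Nat.card_coe_set_eq, ← Nat.card_coe_set_eq]
  exact Nat.card_congr (Equiv.subtypeEquiv (Set.sumEquiv (α := X) (β := Y)).toEquiv
    (fun W => Iff.rfl))

lemma union_subset_sum {X Y : Type} (A : Set X) (B : Set Y) (W : Set (X ⊕ Y)) :
    W ⊆ Sum.inl '' A ∪ Sum.inr '' B ↔ Sum.inl ⁻¹' W ⊆ A ∧ Sum.inr ⁻¹' W ⊆ B := by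
  constructor
  · intro h
    constructor
    · intro x hx
      simpa using h hx
    · intro x hx
      simpa using h hx
  · rintro ⟨h1, h2⟩ (x | x) hx
    · exact Or.inl ⟨x, h1 hx, rfl⟩
    · exact Or.inr ⟨x, h2 hx, rfl⟩

/-- The topology on `X ⊕ Y` that stacks `Y` on `X`: an open set whose trace on `Y` is not contained
in `B` contains all of `X`. -/
@[reducible]
def stack (X Y : Type) [TopologicalSpace X] [TopologicalSpace Y] (B : Set Y) :
    TopologicalSpace (X ⊕ Y) where
  IsOpen W := IsOpen (Sum.inl ⁻¹' W) ∧ IsOpen (Sum.inr ⁻¹' W) ∧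
    (Sum.inr ⁻¹' W ⊆ B ∨ Sum.inl ⁻¹' W = Set.univ)
  isOpen_univ := by simp
  isOpen_inter := by
    rintro W W' ⟨h1, h2, h3⟩ ⟨h1', h2', h3'⟩
    refine ⟨h1.inter h1', h2.inter h2', ?_⟩
    rcases h3 with h3 | h3
    · exact Or.inl (Set.inter_subset_left.trans h3)
    rcases h3' with h3' | h3'
    · exact Or.inl (Set.inter_subset_right.trans h3')
    · right
      rw [Set.preimage_inter, h3, h3', Set.inter_univ]
  isOpen_sUnion := by
    intro S hS
    refine ⟨?_, ?_, ?_⟩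
    · rw [Set.preimage_sUnion]
      exact isOpen_biUnion fun W hW => (hS W hW).1
    · rw [Set.preimage_sUnion]
      exact isOpen_biUnion fun W hW => (hS W hW).2.1
    · by_cases h : ∃ W ∈ S, Sum.inl ⁻¹' W = (Set.univ : Set X)
      · obtain ⟨W, hW, h⟩ := h
        right
        rw [Set.eq_univ_iff_forall] at h ⊢
        exact fun x => ⟨W, hW, h x⟩
      · left
        rintro y ⟨W, hW, hy⟩
        exact ((hS W hW).2.2.resolve_right fun h' => h ⟨W, hW, h'⟩) hy

/-- Gadgets compose like the affine maps `j ↦ M * j + s`. -/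
lemma Gadget.comp {p M s q N t : ℕ} (hY : Gadget p M s) (hX : Gadget q N t) :
    Gadget (p + q) (M * N) (M * t + s) := by
  obtain ⟨Y, _, _, B, rfl, rfl, rfl⟩ := hY
  obtain ⟨X, _, _, A, rfl, rfl, rfl⟩ := hX
  refine ⟨X ⊕ Y, inferInstance, stack X Y B, Sum.inl '' A ∪ Sum.inr '' B,
    by rw [Nat.card_sum, add_comm], ?_, ?_⟩
  · simp only [union_subset_sum]
    have := ncard_sum_sets (fun (U : Set X) (V : Set Y) =>
      (IsOpen U ∧ IsOpen V ∧ (V ⊆ B ∨ U = Set.univ)) ∧ U ⊆ A ∧ V ⊆ B)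
    refine this.trans ?_
    rw [mul_comm, ← Set.ncard_prod]
    congr 1
    ext ⟨U, V⟩
    simp only [Set.mem_ofPred_eq, Set.mem_prod]
    tauto
  · simp only [union_subset_sum]
    have := ncard_sum_sets (fun (U : Set X) (V : Set Y) =>
      (IsOpen U ∧ IsOpen V ∧ (V ⊆ B ∨ U = Set.univ)) ∧ ¬ (U ⊆ A ∧ V ⊆ B))
    refine this.trans ?_
    -- Either the trace on `Y` lies in `B` and the trace on `X` is not in `A`, or the trace on `Y`
    -- does not lie in `B` and the trace on `X` is everything.
    have hs : {q : Set X × Set Y | (IsOpen q.1 ∧ IsOpen q.2 ∧ (q.2 ⊆ B ∨ q.1 = Set.univ)) ∧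
        ¬ (q.1 ⊆ A ∧ q.2 ⊆ B)} =
        ({U : Set X | IsOpen U ∧ ¬ U ⊆ A} ×ˢ {V : Set Y | IsOpen V ∧ V ⊆ B}) ∪
        (({Set.univ} : Set (Set X)) ×ˢ {V : Set Y | IsOpen V ∧ ¬ V ⊆ B}) := by
      ext ⟨U, V⟩
      simp only [Set.mem_ofPred_eq, Set.mem_prod, Set.mem_union, Set.mem_singleton_iff]
      have : U = Set.univ → IsOpen U := fun h => h ▸ isOpen_univ
      tauto
    rw [hs, Set.ncard_union_eq _ (Set.toFinite _) (Set.toFinite _), Set.ncard_prod, Set.ncard_prod,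
      Set.ncard_singleton, one_mul, mul_comm]
    rw [Set.disjoint_left]
    rintro ⟨U, V⟩ h h'
    exact h'.2.2 h.2.2

/-- The disjoint union of two gadgets. -/
lemma Gadget.prod {p M s q N t : ℕ} (hX : Gadget p M s) (hY : Gadget q N t) :
    Gadget (p + q) (M * N) (M * t + s * N + s * t) := by
  obtain ⟨X, _, _, A, rfl, rfl, rfl⟩ := hX
  obtain ⟨Y, _, _, B, rfl, rfl, rfl⟩ := hY
  refine ⟨X ⊕ Y, inferInstance, inferInstance, Sum.inl '' A ∪ Sum.inr '' B,
    by rw [Nat.card_sum], ?_, ?_⟩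
  · simp only [union_subset_sum, isOpen_sum_iff]
    have := ncard_sum_sets (fun (U : Set X) (V : Set Y) =>
      (IsOpen U ∧ IsOpen V) ∧ U ⊆ A ∧ V ⊆ B)
    refine this.trans ?_
    rw [← Set.ncard_prod]
    congr 1
    ext ⟨U, V⟩
    simp only [Set.mem_ofPred_eq, Set.mem_prod]
    tauto
  · simp only [union_subset_sum, isOpen_sum_iff]
    have := ncard_sum_sets (fun (U : Set X) (V : Set Y) =>
      (IsOpen U ∧ IsOpen V) ∧ ¬ (U ⊆ A ∧ V ⊆ B))
    refine this.trans ?_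
    have hs : {q : Set X × Set Y | (IsOpen q.1 ∧ IsOpen q.2) ∧ ¬ (q.1 ⊆ A ∧ q.2 ⊆ B)} =
        ({U : Set X | IsOpen U ∧ U ⊆ A} ×ˢ {V : Set Y | IsOpen V ∧ ¬ V ⊆ B}) ∪
        ({U : Set X | IsOpen U ∧ ¬ U ⊆ A} ×ˢ {V : Set Y | IsOpen V ∧ V ⊆ B}) ∪
        ({U : Set X | IsOpen U ∧ ¬ U ⊆ A} ×ˢ {V : Set Y | IsOpen V ∧ ¬ V ⊆ B}) := by
      ext ⟨U, V⟩
      simp only [Set.mem_ofPred_eq, Set.mem_prod, Set.mem_union]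
      tauto
    rw [hs, Set.ncard_union_eq _ (Set.toFinite _) (Set.toFinite _),
      Set.ncard_union_eq _ (Set.toFinite _) (Set.toFinite _), Set.ncard_prod, Set.ncard_prod,
      Set.ncard_prod]
    · rw [Set.disjoint_left]
      rintro ⟨U, V⟩ h h'
      exact h'.1.2 h.1.2
    · rw [Set.disjoint_left]
      rintro ⟨U, V⟩ (h | h) h'
      · exact h'.1.2 h.1.2
      · exact h'.2.2 h.2.2

lemma Gadget.space {p M s : ℕ} (h : Gadget p M s) : Space p (M + s) := by
  obtain ⟨X, _, _, A, rfl, rfl, rfl⟩ := h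
  refine ⟨X, inferInstance, inferInstance, rfl, ?_⟩
  rw [← Set.ncard_union_eq _ (Set.toFinite _) (Set.toFinite _)]
  · congr 1
    ext U
    simp only [Set.mem_ofPred_eq, Set.mem_union]
    tauto
  · rw [Set.disjoint_left]
    rintro U h h'
    exact h'.2 h.2

lemma Space.gadget {p k : ℕ} (h : Space p k) : Gadget p k 0 := by
  obtain ⟨X, _, _, rfl, rfl⟩ := h
  exact ⟨X, inferInstance, inferInstance, Set.univ, rfl, by simp, by simp⟩

lemma Gadget.apply {p M s q j : ℕ} (h : Gadget p M s) (hj : Space q j) :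
    Space (p + q) (M * j + s) := by
  simpa using (h.comp hj.gadget).space

/-! ### The gadgets -/

lemma space_zero : Space 0 1 := by
  refine ⟨Empty, inferInstance, inferInstance, by simp, ?_⟩
  have : {U : Set Empty | IsOpen U} = {∅} := by
    ext U
    simp [Set.eq_empty_of_isEmpty U]
  rw [this, Set.ncard_singleton]

lemma gadget_inc : Gadget 1 1 1 := by
  refine ⟨Unit, inferInstance, inferInstance, ∅, by simp, ?_, ?_⟩
  · have : {U : Set Unit | IsOpen U ∧ U ⊆ ∅} = {∅} := by
      ext U
      simp [Set.subset_empty_iff]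
    rw [this, Set.ncard_singleton]
  · have : {U : Set Unit | IsOpen U ∧ ¬ U ⊆ ∅} = {Set.univ} := by
      ext U
      simp only [isOpen_discrete, Set.subset_empty_iff, Set.mem_ofPred_eq, Set.mem_singleton_iff,
        true_and]
      rw [← ne_eq, ← Set.nonempty_iff_ne_empty]
      exact ⟨Subsingleton.eq_univ_of_nonempty, fun h => h ▸ Set.univ_nonempty⟩
    rw [this, Set.ncard_singleton]

lemma gadget_double : Gadget 1 2 0 := by
  simpa using gadget_inc.space.gadget

/-- The gadget `j ↦ 2 ^ r * j + 1`. -/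
lemma gadget_pow_inc (r : ℕ) : Gadget (r + 1) (2 ^ r) 1 := by
  induction r with
  | zero => exact gadget_inc
  | succ r ih =>
    have := ih.comp gadget_double
    simpa [pow_succ] using this

lemma gadget_four : Gadget 2 4 0 := gadget_double.comp gadget_double

lemma gadget_8_7 : Gadget 5 8 7 := (gadget_pow_inc 1).prod (gadget_pow_inc 2)

lemma gadget_16_3 : Gadget 6 16 3 := (gadget_pow_inc 1).comp (gadget_pow_inc 3)

lemma gadget_16_7 : Gadget 6 16 7 := gadget_8_7.comp gadget_double

lemma gadget_16_11 : Gadget 6 16 11 := (gadget_pow_inc 1).prod (gadget_pow_inc 3)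

lemma gadget_64_15 : Gadget 9 64 15 := (gadget_pow_inc 1).comp (gadget_8_7.comp gadget_four)

lemma gadget_64_31 : Gadget 9 64 31 := (gadget_pow_inc 2).prod gadget_16_3

lemma gadget_64_47 : Gadget 9 64 47 :=
  (gadget_pow_inc 1).prod ((gadget_pow_inc 2).comp (gadget_pow_inc 3))

lemma gadget_128_127 : Gadget 10 128 127 :=
  (gadget_pow_inc 1).prod ((gadget_pow_inc 2).prod (gadget_pow_inc 4))

lemma gadget_256_63 : Gadget 12 256 63 :=
  (gadget_pow_inc 1).comp
    (((gadget_pow_inc 1).prod ((gadget_pow_inc 2).comp (gadget_pow_inc 2))).comp gadget_four)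

lemma gadget_256_191 : Gadget 12 256 191 :=
  (gadget_pow_inc 1).prod
    ((gadget_pow_inc 2).comp ((gadget_pow_inc 2).comp (gadget_pow_inc 3)))

/-! ### The induction -/

/-- Whenever `k ^ 3 ≤ 4 ^ m`, at most `m + 1` points suffice for `k` open sets. -/
def Fits (k : ℕ) : Prop := ∀ m, k ^ 3 ≤ 4 ^ m → ∃ p ≤ m + 1, Space p k

lemma Fits.step {q M s j : ℕ} (hg : Gadget q M s) (hq : 4 ^ q ≤ M ^ 3) (hj : 1 ≤ j)
    (h : Fits j) : Fits (M * j + s) := by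
  intro m hm
  have hMj : (M * j) ^ 3 ≤ 4 ^ m := (Nat.pow_le_pow_left (Nat.le_add_right _ _) 3).trans hm
  have hqj : 4 ^ q * j ^ 3 ≤ 4 ^ m := by
    rw [mul_pow] at hMj
    exact (Nat.mul_le_mul_right _ hq).trans hMj
  have hqm : q ≤ m := by
    refine (Nat.pow_le_pow_iff_right (by norm_num : 1 < 4)).1 ?_
    exact (Nat.le_mul_of_pos_right _ (Nat.pow_pos hj)).trans hqj
  obtain ⟨d, rfl⟩ := Nat.exists_eq_add_of_le hqm
  rw [pow_add] at hqj
  obtain ⟨p, hp, hs⟩ := h d (Nat.le_of_mul_le_mul_left hqj (by positivity))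
  exact ⟨q + p, by omega, hg.apply hs⟩

lemma Space.fits {q k : ℕ} (h : Space (q + 2) k) (hk : 4 ^ q < k ^ 3) : Fits k := by
  intro m hm
  have : q < m := (Nat.pow_lt_pow_iff_right (by norm_num : 1 < 4)).1 (hk.trans_le hm)
  exact ⟨q + 2, by omega, h⟩

lemma space_3 : Space 2 3 := (gadget_pow_inc 1).apply space_zero

lemma space_7 : Space 4 7 := (gadget_pow_inc 1).apply space_3

lemma space_11 : Space 5 11 := (gadget_pow_inc 1).apply ((gadget_pow_inc 2).apply space_zero)

lemma space_15 : Space 5 15 := gadget_8_7.apply space_zero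

lemma space_23 : Space 6 23 := gadget_16_7.apply space_zero

lemma fits (k : ℕ) (hk : 1 ≤ k) : Fits k := by
  induction k using Nat.strong_induction_on with
  | _ k ih =>
  -- `k = M * j + s` with `j = 0` only when `k` is one of the finitely many residues `s`.
  have step : ∀ q M s, Gadget q M s → 4 ^ q ≤ M ^ 3 → 2 ≤ M → k % M = s →
      Fits s ∨ s = 0 → Fits k := by
    intro q M s hg hq hM hs hf
    have e := Nat.div_add_mod k M
    rw [hs] at e
    rcases Nat.eq_zero_or_pos (k / M) with h0 | h0
    · rw [h0, mul_zero, zero_add] at e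
      exact e ▸ hf.resolve_right (by omega)
    · rw [← e]
      exact Fits.step hg hq h0 (ih _ (Nat.div_lt_self hk hM) h0)
  by_cases h2 : k % 2 = 0
  · exact step _ _ _ gadget_double (by norm_num) le_rfl h2 (Or.inr rfl)
  by_cases h4 : k % 4 = 1
  · refine step _ _ _ (gadget_pow_inc 2) (by norm_num) (by norm_num) h4 (Or.inl ?_)
    exact fun m _ => ⟨0, by omega, space_zero⟩
  have h16 : k % 16 = 3 ∨ k % 16 = 7 ∨ k % 16 = 11 ∨ k % 64 = 15 ∨ k % 64 = 31 ∨ k % 64 = 47 ∨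
      k % 128 = 127 ∨ k % 256 = 63 ∨ k % 256 = 191 := by omega
  rcases h16 with h | h | h | h | h | h | h | h | h
  · exact step _ _ _ gadget_16_3 (by norm_num) (by norm_num) h
      (Or.inl (space_3.fits (by norm_num)))
  · exact step _ _ _ gadget_16_7 (by norm_num) (by norm_num) h
      (Or.inl (space_7.fits (by norm_num)))
  · exact step _ _ _ gadget_16_11 (by norm_num) (by norm_num) h
      (Or.inl (space_11.fits (by norm_num)))
  · exact step _ _ _ gadget_64_15 (by norm_num) (by norm_num) h
      (Or.inl (space_15.fits (by norm_num)))
  · exact step _ _ _ gadget_64_31 (by norm_num) (by norm_num) h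
      (Or.inl (Space.fits (q := 5) ((gadget_pow_inc 1).apply space_15) (by norm_num)))
  · exact step _ _ _ gadget_64_47 (by norm_num) (by norm_num) h
      (Or.inl (Space.fits (q := 6) ((gadget_pow_inc 1).apply space_23) (by norm_num)))
  · exact step _ _ _ gadget_128_127 (by norm_num) (by norm_num) h
      (Or.inl (Space.fits (q := 8) (gadget_8_7.apply space_15) (by norm_num)))
  · exact step _ _ _ gadget_256_63 (by norm_num) (by norm_num) h
      (Or.inl (Space.fits (q := 7) (gadget_8_7.apply space_7) (by norm_num)))
  · exact step _ _ _ gadget_256_191 (by norm_num) (by norm_num) h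
      (Or.inl (Space.fits (q := 9) (gadget_8_7.apply space_23) (by norm_num)))

/-- Padding with topologically indistinguishable points. -/
lemma Space.pad {p k n : ℕ} (h : Space p k) (hk : 2 ≤ k) (hpn : p ≤ n) :
    ∃ t : TopologicalSpace (Fin n), Nat.card {s : Set (Fin n) // t.IsOpen s} = k := by
  obtain ⟨X, _, tX, rfl, rfl⟩ := h
  have : Nonempty X := by
    by_contra hX
    rw [not_nonempty_iff] at hX
    have : {U : Set X | IsOpen U}.ncard ≤ 1 :=
      Set.ncard_le_one_iff (Set.toFinite _) |>.2 fun _ _ => Subsingleton.elim _ _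
    omega
  obtain ⟨f, hf⟩ : ∃ f : Fin n → X, Function.Surjective f := by
    have := Fintype.ofFinite X
    obtain ⟨g⟩ : Nonempty (X ↪ Fin n) :=
      Function.Embedding.nonempty_of_card_le (by rwa [Fintype.card_fin, ← Nat.card_eq_fintype_card])
    exact ⟨Function.invFun g, Function.invFun_surjective g.injective⟩
  refine ⟨tX.induced f, ?_⟩
  have himg : {s : Set (Fin n) | (tX.induced f).IsOpen s} =
      (fun U => f ⁻¹' U) '' {U : Set X | IsOpen U} := rfl
  rw [← Set.ncard_image_of_injective _ hf.preimage_injective, ← himg]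
  rfl

/-- For all integers `n ≥ 1` and `k` with `2 ≤ k` and `k ^ 3 ≤ 2 ^ (2 * (n - 1))`,
there exists a topology on a set of `n` points having exactly `k` open sets. -/
theorem T_pos_doubles (n k : ℕ) (hn : 1 ≤ n) (hk : 2 ≤ k)
    (hkn : k ^ 3 ≤ 2 ^ (2 * (n - 1))) :
    ∃ t : TopologicalSpace (Fin n), Nat.card {s : Set (Fin n) // t.IsOpen s} = k := by
  rw [pow_mul] at hkn
  obtain ⟨p, hp, hs⟩ := fits k (by omega) (n - 1) hkn
  exact hs.pad hk (by omega)
end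

section
/- Let k ≥ 2 be an integer, and suppose there exists a topology on a set of n points having exactly k open sets. Then there exists a natural number n' ≤ n and a T₀ topology on a set of n' points having exactly k open sets. Consequently, m(k) is also the minimum number of points on which there exists a T₀ topology with exactly k open sets. -/
/-!
Passing to the T₀ (Kolmogorov) quotient, which identifies topologically indistinguishable points,
does not increase the number of points and does not change the lattice of open sets: every open
set is saturated, so taking preimages under the quotient map is a bijection between the open sets
of the quotient and those of the original space. Transported to `Fin n'`, with `n'` the number of
points of the quotient, this is `exists_T0_of_card_isOpen`. The equality of minima follows: the
T₀ cardinalities form a subset of all cardinalities, and each of the latter is bounded below by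
some T₀ cardinality.
-/

theorem card_isOpen_separationQuotient (X : Type*) [TopologicalSpace X] :
    Nat.card {s : Set (SeparationQuotient X) // IsOpen s} = Nat.card {s : Set X // IsOpen s} := by
  refine Nat.card_congr (Equiv.ofBijective
    (fun s => ⟨SeparationQuotient.mk ⁻¹' s.1, s.2.preimage SeparationQuotient.continuous_mk⟩)
    ⟨fun s u hsu => ?_, fun s => ?_⟩)
  · exact Subtype.ext (SeparationQuotient.surjective_mk.preimage_injective
      (congrArg Subtype.val hsu))
  · exact ⟨⟨_, SeparationQuotient.isOpenMap_mk s.1 s.2⟩,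
      Subtype.ext (SeparationQuotient.preimage_image_mk_open s.2)⟩

theorem card_isOpen_congr {X Y : Type*} [TopologicalSpace X] [TopologicalSpace Y] (e : X ≃ₜ Y) :
    Nat.card {s : Set X // IsOpen s} = Nat.card {s : Set Y // IsOpen s} :=
  Nat.card_congr ((Equiv.Set.congr e.toEquiv).subtypeEquiv fun s => (e.isOpen_image (s := s)).symm)

/-- The witness is the T₀ quotient of `t`, relabelled by `Fin n'`. -/
theorem exists_T0_of_card_isOpen {k n : ℕ} (t : TopologicalSpace (Fin n))
    (h : Nat.card {s : Set (Fin n) // t.IsOpen s} = k) :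
    ∃ n' ≤ n, ∃ t' : TopologicalSpace (Fin n'),
      @T0Space (Fin n') t' ∧ Nat.card {s : Set (Fin n') // t'.IsOpen s} = k := by
  have hfin : Finite (SeparationQuotient (Fin n)) :=
    Finite.of_surjective _ SeparationQuotient.surjective_mk
  let e := (Finite.equivFin (SeparationQuotient (Fin n))).symm
  let t' : TopologicalSpace (Fin (Nat.card (SeparationQuotient (Fin n)))) :=
    TopologicalSpace.induced e inferInstance
  let e' : Fin (Nat.card (SeparationQuotient (Fin n))) ≃ₜ SeparationQuotient (Fin n) :=
    e.toHomeomorphOfIsInducing ⟨rfl⟩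
  refine ⟨_, ?_, t', e'.symm.t0Space, ?_⟩
  · simpa using Nat.card_le_card_of_surjective _
      (SeparationQuotient.surjective_mk (X := Fin n))
  · exact ((card_isOpen_congr e').trans (card_isOpen_separationQuotient (Fin n))).trans h

/-- If `k ≥ 2` and there is a topology on `n` points with exactly `k` open sets,
then there is some `n' ≤ n` and a `T₀` topology on `n'` points with exactly `k`
open sets.  Consequently, the least number of points carrying a topology with
`k` open sets equals the least number of points carrying a `T₀` topology with
`k` open sets. -/
theorem m_eq_m_T0 (k n : ℕ) (hk : 2 ≤ k) (t : TopologicalSpace (Fin n))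
    (h : Nat.card {s : Set (Fin n) // t.IsOpen s} = k) :
    (∃ n' ≤ n, ∃ t' : TopologicalSpace (Fin n'),
        @T0Space (Fin n') t' ∧ Nat.card {s : Set (Fin n') // t'.IsOpen s} = k) ∧
      sInf {m : ℕ | ∃ t' : TopologicalSpace (Fin m),
          Nat.card {s : Set (Fin m) // t'.IsOpen s} = k} =
        sInf {m : ℕ | ∃ t' : TopologicalSpace (Fin m),
          @T0Space (Fin m) t' ∧ Nat.card {s : Set (Fin m) // t'.IsOpen s} = k} := by
  refine ⟨exists_T0_of_card_isOpen t h, le_antisymm ?_ ?_⟩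
  -- `sInf ∅ = 0` in `ℕ`, so both inequalities need the sets to be nonempty, as `t` ensures.
  · obtain ⟨n', -, t', h0, h'⟩ := exists_T0_of_card_isOpen t h
    exact csInf_le_csInf (OrderBot.bddBelow _) ⟨n', t', h0, h'⟩ fun m ⟨u, _, hu⟩ => ⟨u, hu⟩
  · refine le_csInf ⟨n, t, h⟩ fun m ⟨u, hu⟩ => ?_
    obtain ⟨m', hm, u', h0, h'⟩ := exists_T0_of_card_isOpen u hu
    exact le_trans (Nat.sInf_le ⟨u', h0, h'⟩) hm
end

section
/- Let P be a finite partially ordered set and x ∈ P. Then j(P) = j(P ∖ {x}) + j(P_x), where P ∖ {x} is the subposet obtained by removing the single element x, and P_x is the subposet of all elements of P that are incomparable to x (i.e., all y with neither y ≤ x nor x ≤ y). -/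
/-!
Split the lower sets `I` of `P` according to whether `x` is a maximal element of `I`.

* If `x` is a maximal element of `I`, then `I` contains every `y ≤ x` and no `y > x`, so it is
  determined by its trace on the elements incomparable to `x`. That trace is an arbitrary lower set
  `K`, the inverse being `K ↦ K ∪ {y | y ≤ x}` (`lowerSetsMaximalEquiv`).
* Otherwise `x ∈ I` exactly when `I` contains some `y > x`, so `I` is the lower closure in `P` of
  `I \ {x}`, and `I \ {x}` is an arbitrary lower set of `P \ {x}` (`lowerSetsNotMaximalEquiv`).
-/

/-- `x` is a maximal element of `I`, phrased without reference to the strict order. -/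
def IsMaxElem {P : Type*} [PartialOrder P] (x : P) (I : Set P) : Prop :=
  x ∈ I ∧ ∀ y ∈ I, x ≤ y → y = x

/-- Lower sets having `x` as a maximal element correspond to lower sets of the poset of elements
incomparable to `x`, by restriction; the inverse adjoins all `y ≤ x`. -/
def lowerSetsMaximalEquiv {P : Type*} [PartialOrder P] (x : P) :
    {I : {I : Set P // IsLowerSet I} // IsMaxElem x I.1} ≃
      {I : Set {y : P // ¬ y ≤ x ∧ ¬ x ≤ y} // IsLowerSet I} where
  toFun I := ⟨{y | y.1 ∈ I.1.1}, fun _ _ hba ha => I.1.2 hba ha⟩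
  invFun K := ⟨⟨{y | y ≤ x ∨ ∃ h, ⟨y, h⟩ ∈ K.1}, by
      rintro a b hba (ha | ⟨h, ha⟩)
      · exact Or.inl (hba.trans ha)
      · by_cases hb : b ≤ x
        · exact Or.inl hb
        · exact Or.inr ⟨⟨hb, fun hx => h.2 (hx.trans hba)⟩, K.2 hba ha⟩⟩, by
      refine ⟨Or.inl le_rfl, ?_⟩
      rintro y (hy | ⟨h, -⟩) hxy
      · exact le_antisymm hy hxy
      · exact absurd hxy h.2⟩
  left_inv := by
    rintro ⟨⟨I, hI⟩, hx, hmax⟩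
    ext y
    constructor
    · rintro (hy | ⟨_, hy⟩)
      · exact hI hy hx
      · exact hy
    · intro hy
      by_cases hyx : y ≤ x
      · exact Or.inl hyx
      · exact Or.inr ⟨⟨hyx, fun hxy => hyx (hmax y hy hxy).le⟩, hy⟩
  right_inv := by
    rintro ⟨K, hK⟩
    ext ⟨y, hy⟩
    constructor
    · rintro (h | ⟨_, h⟩)
      · exact absurd h hy.1
      · exact h
    · exact fun h => Or.inr ⟨hy, h⟩

/-- Lower sets not having `x` as a maximal element correspond to lower sets of `P \ {x}`, by
restriction; the inverse is the lower closure in `P`. -/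
def lowerSetsNotMaximalEquiv {P : Type*} [PartialOrder P] (x : P) :
    {I : {I : Set P // IsLowerSet I} // ¬ IsMaxElem x I.1} ≃
      {I : Set {y : P // y ≠ x} // IsLowerSet I} where
  toFun I := ⟨{y | y.1 ∈ I.1.1}, fun _ _ hba ha => I.1.2 hba ha⟩
  invFun J := ⟨⟨{y | ∃ z ∈ J.1, y ≤ z.1}, by
      rintro a b hba ⟨z, hz, haz⟩
      exact ⟨z, hz, hba.trans haz⟩⟩, by
      rintro ⟨⟨z, hz, hxz⟩, hmax⟩
      exact z.2 (hmax z.1 ⟨z, hz, le_rfl⟩ hxz)⟩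
  left_inv := by
    rintro ⟨⟨I, hI⟩, hmax⟩
    ext y
    constructor
    · rintro ⟨z, hz, hyz⟩
      exact hI hyz hz
    · intro hy
      by_cases hyx : y = x
      · -- Since `x` is not maximal in `I`, some `z > x` in `I` witnesses membership of `x`.
        subst hyx
        by_contra hcon
        refine hmax ⟨hy, fun z hz hyz => ?_⟩
        by_contra hne
        exact hcon ⟨⟨z, hne⟩, hz, hyz⟩
      · exact ⟨⟨y, hyx⟩, hy, le_rfl⟩
  right_inv := by
    rintro ⟨J, hJ⟩
    ext y
    constructor
    · rintro ⟨z, hz, hyz⟩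
      exact hJ hyz hz
    · exact fun h => ⟨y, h, le_rfl⟩

/-- For a finite poset `P` and `x ∈ P`, the number of lower sets of `P` equals
the number of lower sets of `P \ {x}` plus the number of lower sets of `P_x`,
the subposet of elements incomparable to `x`. -/
theorem card_lowerSets_remove_elem (P : Type*) [Fintype P] [PartialOrder P] (x : P) :
    Nat.card {I : Set P // IsLowerSet I} =
      Nat.card {I : Set {y : P // y ≠ x} // IsLowerSet I} +
        Nat.card {I : Set {y : P // ¬ y ≤ x ∧ ¬ x ≤ y} // IsLowerSet I} := by
  classical
  rw [← Nat.card_congr (lowerSetsNotMaximalEquiv x), ← Nat.card_congr (lowerSetsMaximalEquiv x),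
    add_comm, ← Nat.card_sum]
  exact (Nat.card_congr (Equiv.sumCompl fun I : {I : Set P // IsLowerSet I} =>
    IsMaxElem x I.1)).symm
end

section
/- For all integers m ≥ 1, n ≥ max(m, 2), and k with 2 ≤ k and k^{3m+1} ≤ 2^{3(n−2)}, there exists a topological space on a set of n points having exactly k open sets in which, for every point x, the minimal open set containing x (the intersection of all open sets containing x) has at least m elements. (Equivalently, T_m(n,k) > 0 for all k in [2, 2^{3(n−2)/(3m+1)}].) -/
/-!
The number of open sets of a finite space is controlled by adding one point at a time.
If `c(D)` denotes the number of open sets containing `D`, adjoining a point `b` whose minimal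
neighbourhood is generated by `b` and `D` gives a space with `c(∅) + c(D)` open sets
(`cnt_lift_false`, `cnt_lift_true`). An isolated point (`D = ∅`) doubles the number of open sets.

**Few points suffice.** Every `k ≥ 1` is the number of open sets of a space with `N` points,
where `2 ^ (3 N) ≤ 64 k ^ 4`, that is `N ≤ (4/3) log₂ k + 2` (`exists_space`).
The binary digits of `k` are read from the top. A digit `0` costs one isolated point, and a window
of three digits with odd value `l` (so `k = 8 k' + l`) costs three isolated points and one
point over a set `D` with `c(D) = l` together with these three: four points for three digits.
This needs sets `D` with `c(D) = 1, 3, 5, 7` to be available at every stage. The property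
`GState` provides them and reproduces itself under each window (`GState.window`). It cannot hold
for small spaces, so the construction starts in the states `HState` (no such sets, two spare
points in the budget) and `TState` (sets for `1, 3, 5`, one spare point); a spare point is spent
when passing from `HState` to `TState`, or, at the first window of value `7`, from `TState` to
`GState`.

**Large neighbourhoods.** A dense subset `A` of minimal cardinality satisfies `2 ^ |A| ≤ k`
(`exists_dense`), and every minimal neighbourhood meets `A`. Replacing each point of `A` by at
least `m` indistinguishable points yields the required space, and `N + (m - 1) |A| ≤ n` follows
from the two bounds. Superfluous points are absorbed by the blow-up.
-/

open Set Topology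

/-! ### One-point extensions -/

/-- The number of open sets of `t` that contain `D`. -/
noncomputable def cnt {α : Type} (t : TopologicalSpace α) (D : Set α) : ℕ :=
  Nat.card {s : Set α // IsOpen[t] s ∧ D ⊆ s}

/-- The topology on `α` with one new point `none`, in which a set containing `none` is open iff
its trace on `α` is open and contains `D`. For `D = ∅` the new point is open and closed. -/
abbrev extT {α : Type} (t : TopologicalSpace α) (D : Set α) : TopologicalSpace (Option α) where
  IsOpen s := IsOpen[t] (some ⁻¹' s) ∧ (none ∈ s → D ⊆ some ⁻¹' s)
  isOpen_univ := ⟨by simp, by simp⟩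
  isOpen_inter s u hs hu :=
    ⟨hs.1.inter hu.1, fun h => subset_inter (hs.2 h.1) (hu.2 h.2)⟩
  isOpen_sUnion S hS := by
    refine ⟨?_, ?_⟩
    · rw [preimage_sUnion]
      exact isOpen_biUnion fun s hs => (hS s hs).1
    · rintro ⟨s, hs, hn⟩ x hx
      exact ⟨s, hs, (hS s hs).2 hn hx⟩

/-- The subset of `Option α` with trace `E` on `α`, containing `none` iff `b = true`. -/
def lift {α : Type} (E : Set α) (b : Bool) : Set (Option α) :=
  {x | x.elim (b = true) (· ∈ E)}

section lift
variable {α : Type}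

@[simp] lemma none_mem_lift (E : Set α) (b : Bool) : none ∈ lift E b ↔ b = true := Iff.rfl

@[simp] lemma some_mem_lift (E : Set α) (b : Bool) (x : α) : some x ∈ lift E b ↔ x ∈ E := Iff.rfl

@[simp] lemma preimage_lift (E : Set α) (b : Bool) : some ⁻¹' lift E b = E := rfl

@[simp] lemma lift_union (E F : Set α) (b c : Bool) :
    lift E b ∪ lift F c = lift (E ∪ F) (b || c) := by
  ext x; cases x <;> simp

lemma univ_eq_lift : (univ : Set (Option α)) = lift univ true := by
  ext x; cases x <;> simp

lemma empty_eq_lift : (∅ : Set (Option α)) = lift ∅ false := by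
  ext x; cases x <;> simp

lemma lift_subset (E : Set α) (b : Bool) (s : Set (Option α)) :
    lift E b ⊆ s ↔ E ⊆ some ⁻¹' s ∧ (b = true → none ∈ s) := by
  constructor
  · intro h
    exact ⟨fun x hx => h (by simpa using hx), fun hb => h (by simpa using hb)⟩
  · rintro ⟨h1, h2⟩ x hx
    cases x with
    | none => exact h2 hx
    | some x => exact h1 hx

lemma lift_eta (s : Set (Option α)) [Decidable (none ∈ s)] :
    lift (some ⁻¹' s) (decide (none ∈ s)) = s := by
  ext x; cases x <;> simp

lemma isOpen_extT (t : TopologicalSpace α) (D : Set α) (s : Set (Option α)) :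
    IsOpen[extT t D] s ↔ IsOpen[t] (some ⁻¹' s) ∧ (none ∈ s → D ⊆ some ⁻¹' s) := Iff.rfl

lemma cnt_lift_true (t : TopologicalSpace α) (D E : Set α) :
    cnt (extT t D) (lift E true) = cnt t (E ∪ D) := by
  classical
  refine Nat.card_congr ⟨fun s => ⟨some ⁻¹' s.1, ?_⟩, fun s => ⟨lift s.1 true, ?_⟩, ?_, ?_⟩
  · obtain ⟨s, ⟨h1, h2⟩, h3⟩ := s
    rw [lift_subset] at h3
    exact ⟨h1, union_subset h3.1 (h2 (h3.2 rfl))⟩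
  · obtain ⟨s, h1, h2⟩ := s
    rw [union_subset_iff] at h2
    rw [isOpen_extT, lift_subset]
    simp [h1, h2.1, h2.2]
  · rintro ⟨s, ⟨h1, h2⟩, h3⟩
    rw [lift_subset] at h3
    have := lift_eta s
    simpa [h3.2 rfl] using this
  · rintro ⟨s, h1, h2⟩
    simp

/-- The open sets without the new point contribute `c(E)`, those with it `c(E ∪ D)`. -/
lemma cnt_lift_false [Finite α] (t : TopologicalSpace α) (D E : Set α) :
    cnt (extT t D) (lift E false) = cnt t E + cnt t (E ∪ D) := by
  classical
  rw [← cnt_lift_true t D E, cnt, cnt, cnt, ← Nat.card_sum]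
  refine Nat.card_congr
    ⟨fun s => if h : none ∈ s.1 then .inr ⟨s.1, ?_⟩ else .inl ⟨some ⁻¹' s.1, ?_⟩,
      fun s => s.elim (fun u => ⟨lift u.1 false, ?_⟩) (fun u => ⟨u.1, ?_⟩), ?_, ?_⟩
  · have h3 := s.2.2
    rw [lift_subset] at h3
    exact ⟨s.2.1, (lift_subset _ _ _).2 ⟨h3.1, fun _ => h⟩⟩
  · have h3 := s.2.2
    rw [lift_subset] at h3
    exact ⟨s.2.1.1, h3.1⟩
  · rw [isOpen_extT, lift_subset]
    simp [u.2.1, u.2.2]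
  · have h3 := u.2.2
    rw [lift_subset] at h3
    exact ⟨u.2.1, (lift_subset _ _ _).2 ⟨h3.1, by simp⟩⟩
  · rintro ⟨s, h1, h3⟩
    have := lift_eta s
    by_cases h : none ∈ s
    · simp [h]
    · simpa [h] using this
  · rintro (⟨s, h1, h3⟩ | ⟨s, h1, h3⟩)
    · simp
    · have h4 : none ∈ s := ((lift_subset _ _ _).1 h3).2 rfl
      simp [h4]

@[simp] lemma cnt_univ (t : TopologicalSpace α) : cnt t univ = 1 := by
  rw [cnt, Nat.card_eq_one_iff_unique]
  refine ⟨⟨?_⟩, ⟨⟨univ, by simp, subset_rfl⟩⟩⟩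
  rintro ⟨s, _, hs⟩ ⟨u, _, hu⟩
  simp only [univ_subset_iff] at hs hu
  simp [hs, hu]

end lift

/-! ### The states of the construction -/

/-- A space with `k` open sets whose number of points is two below the budget. -/
def HState (k : ℕ) : Prop :=
  ∃ (α : Type) (_ : Finite α) (t : TopologicalSpace α),
    cnt t ∅ = k ∧ 2 ^ (3 * (Nat.card α + 2)) ≤ 64 * k ^ 4

/-- A space with `k` open sets whose number of points is one below the budget, with sets `D₃`,
`D₅` contained in exactly 3 and 5 open sets, and `M` such that `M ∪ D₃` is contained in
exactly 2. -/
def TState (k : ℕ) : Prop :=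
  ∃ (α : Type) (_ : Finite α) (t : TopologicalSpace α),
    cnt t ∅ = k ∧ 2 ^ (3 * (Nat.card α + 1)) ≤ 64 * k ^ 4 ∧
    ∃ D3 D5 M : Set α, cnt t D3 = 3 ∧ cnt t D5 = 5 ∧ cnt t (M ∪ D3) = 2

/-- If three isolated points and a point `b` over `D` and these three are adjoined, some set
that omits `b` and at most one of the three isolated points is contained in exactly `v` open
sets. -/
def Reach {α : Type} (t : TopologicalSpace α) (D : Set α) (v : ℕ) : Prop :=
  ∃ F, cnt t F + cnt t (F ∪ D) = v ∨ 2 * cnt t F + cnt t (F ∪ D) = v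

/-- There is a set contained in exactly `l` open sets over which the next window can be built
so that sets for the values 5 and 7 are again available. -/
def Avail {α : Type} (t : TopologicalSpace α) (l : ℕ) : Prop :=
  ∃ D, cnt t D = l ∧ Reach t D 5 ∧ Reach t D 7

/-- A space with `k` open sets within the budget that can be extended by windows of every odd
value, indefinitely. -/
def GState (k : ℕ) : Prop :=
  ∃ (α : Type) (_ : Finite α) (t : TopologicalSpace α),
    cnt t ∅ = k ∧ 2 ^ (3 * Nat.card α) ≤ 64 * k ^ 4 ∧
    Avail t 1 ∧ Avail t 3 ∧ Avail t 5 ∧ Avail t 7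

lemma budget_double {a k : ℕ} (h : 2 ^ (3 * a) ≤ 64 * k ^ 4) :
    2 ^ (3 * (a + 1)) ≤ 64 * (2 * k) ^ 4 := by
  have : 2 ^ (3 * (a + 1)) = 8 * 2 ^ (3 * a) := by ring
  have : 64 * (2 * k) ^ 4 = 16 * (64 * k ^ 4) := by ring
  omega

lemma budget_window {a k : ℕ} (l : ℕ) (h : 2 ^ (3 * a) ≤ 64 * k ^ 4) :
    2 ^ (3 * (a + 4)) ≤ 64 * (8 * k + l) ^ 4 := by
  have h1 : 2 ^ (3 * (a + 4)) = 4096 * 2 ^ (3 * a) := by ring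
  have h2 : 64 * (8 * k) ^ 4 = 4096 * (64 * k ^ 4) := by ring
  have h3 : (8 * k) ^ 4 ≤ (8 * k + l) ^ 4 := Nat.pow_le_pow_left (by omega) 4
  omega

/-! ### Isolated points -/

lemma HState.double {k : ℕ} (h : HState k) : HState (2 * k) := by
  obtain ⟨α, _, t, hk, hb⟩ := h
  refine ⟨Option α, inferInstance, extT t ∅, ?_, ?_⟩
  · rw [empty_eq_lift, cnt_lift_false]; simp [hk]; ring
  · rw [Finite.card_option]; simpa [add_right_comm] using budget_double hb

lemma TState.double {k : ℕ} (h : TState k) : TState (2 * k) := by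
  obtain ⟨α, _, t, hk, hb, D3, D5, M, h3, h5, hM⟩ := h
  refine ⟨Option α, inferInstance, extT t ∅, ?_, ?_, lift D3 true, lift D5 true, lift M true, ?_⟩
  · rw [empty_eq_lift, cnt_lift_false]; simp [hk]; ring
  · rw [Finite.card_option]; simpa [add_right_comm] using budget_double hb
  · simp [cnt_lift_true, h3, h5, hM]

lemma Avail.double {α : Type} {t : TopologicalSpace α} {l : ℕ} (h : Avail t l) :
    Avail (extT t ∅) l := by
  obtain ⟨D, hD, ⟨F, hF⟩, ⟨E, hE⟩⟩ := h
  exact ⟨lift D true, by simp [cnt_lift_true, hD],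
    ⟨lift F true, by simpa [cnt_lift_true] using hF⟩,
    ⟨lift E true, by simpa [cnt_lift_true] using hE⟩⟩

lemma GState.double {k : ℕ} (h : GState k) : GState (2 * k) := by
  obtain ⟨α, _, t, hk, hb, h1, h3, h5, h7⟩ := h
  refine ⟨Option α, inferInstance, extT t ∅, ?_, ?_, h1.double, h3.double, h5.double, h7.double⟩
  · rw [empty_eq_lift, cnt_lift_false]; simp [hk]; ring
  · rw [Finite.card_option]; exact budget_double hb

/-! ### Windows of three digits -/

/-- The underlying set of a window: three isolated points and one more point. -/
abbrev Win (α : Type) : Type := Option (Option (Option (Option α)))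

/-- Three isolated points, and a point over `D` and all of them. -/
abbrev win {α : Type} (t : TopologicalSpace α) (D : Set α) : TopologicalSpace (Win α) :=
  extT (extT (extT (extT t ∅) ∅) ∅) (lift (lift (lift D true) true) true)

/-- The subset of `Win α` with trace `E` on `α` and the prescribed new points. -/
def lift4 {α : Type} (E : Set α) (x y z b : Bool) : Set (Win α) :=
  lift (lift (lift (lift E x) y) z) b

section win
variable {α : Type}

lemma lift4_union (E F : Set α) (x y z b x₂ y₂ z₂ b₂ : Bool) :
    lift4 E x y z b ∪ lift4 F x₂ y₂ z₂ b₂ =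
      lift4 (E ∪ F) (x || x₂) (y || y₂) (z || z₂) (b || b₂) := by
  simp [lift4]

/-- The number of open sets over a set without the last point of the window: the factor counts
the choices for the omitted isolated points. -/
lemma cnt_win [Finite α] (t : TopologicalSpace α) (D E : Set α) (x y z : Bool) : cnt (win t D) (lift4 E x y z false) =
    (bif x then 1 else 2) * (bif y then 1 else 2) * (bif z then 1 else 2) * cnt t E
      + cnt t (E ∪ D) := by
  cases x <;> cases y <;> cases z <;>
    simp [win, lift4, cnt_lift_true, cnt_lift_false] <;> ring

lemma cnt_win_empty [Finite α] (t : TopologicalSpace α) (D : Set α) :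
    cnt (win t D) ∅ = 8 * cnt t ∅ + cnt t D := by
  have := cnt_win t D ∅ false false false
  simpa [lift4, ← empty_eq_lift] using this

lemma card_win [Finite α] : Nat.card (Win α) = Nat.card α + 4 := by
  simp [Win, Finite.card_option]

end win

lemma reach_win {α : Type} [Finite α] (t : TopologicalSpace α) (D X : Set α) (x : Bool) :
    Reach (win t D) (lift4 X x true true false) 5 ∧
      Reach (win t D) (lift4 X x true true false) 7 := by
  refine ⟨⟨lift4 univ true false true false, .inl ?_⟩,
    ⟨lift4 univ true false false false, .inl ?_⟩⟩ <;>
  · rw [lift4_union, cnt_win]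
    simp only [Bool.true_or, Bool.or_true, Bool.or_self]
    rw [cnt_win]
    simp

lemma avail_win_of_reach {α : Type} [Finite α] {t : TopologicalSpace α} {D : Set α} {v : ℕ}
    (h : Reach t D v) : Avail (win t D) v := by
  obtain ⟨F, hF | hF⟩ := h
  · exact ⟨lift4 F true true true false, by simpa [cnt_win] using hF, reach_win t D F true⟩
  · exact ⟨lift4 F false true true false, by simpa [cnt_win] using hF, reach_win t D F false⟩

lemma avail_win_three {α : Type} [Finite α] (t : TopologicalSpace α) (D : Set α) :
    Avail (win t D) 3 :=
  ⟨lift4 univ false true true false, by simp [cnt_win], reach_win t D univ false⟩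

/-- If sets contained in exactly 2 and 3 open sets exist, `univ` serves for the value 1. -/
lemma avail_one {α : Type} {t : TopologicalSpace α} {M D : Set α} (hM : cnt t M = 2)
    (hD : cnt t D = 3) : Avail t 1 :=
  ⟨univ, cnt_univ t, ⟨M, .inr (by simp [hM])⟩, ⟨D, .inr (by simp [hD])⟩⟩

lemma GState.window {k l : ℕ} (h : GState k) (hl : l = 1 ∨ l = 3 ∨ l = 5 ∨ l = 7) :
    GState (8 * k + l) := by
  obtain ⟨α, _, t, hk, hb, h1, h3, h5, h7⟩ := h
  have hA : Avail t l := by rcases hl with rfl | rfl | rfl | rfl <;> assumption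
  obtain ⟨D, hD, r5, r7⟩ := hA
  refine ⟨Win α, inferInstance, win t D, ?_, ?_, ?_, avail_win_three t D,
    avail_win_of_reach r5, avail_win_of_reach r7⟩
  · rw [cnt_win_empty, hk, hD]
  · rw [card_win]; exact budget_window l hb
  · exact avail_one (M := lift4 univ true true true false)
      (D := lift4 univ false true true false) (by simp [cnt_win]) (by simp [cnt_win])

/-- Every window leads to a space with the sets required for `TState`. -/
lemma tState_win {α : Type} [Finite α] (t : TopologicalSpace α) {k l : ℕ} (D : Set α)
    (hk : cnt t ∅ = k) (hD : cnt t D = l) (hb : 2 ^ (3 * (Nat.card α + 1)) ≤ 64 * k ^ 4) :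
    TState (8 * k + l) := by
  refine ⟨Win α, inferInstance, win t D, ?_, ?_, lift4 univ false true true false,
    lift4 univ false false true false, lift4 univ true true true false, ?_⟩
  · rw [cnt_win_empty, hk, hD]
  · rw [card_win]; simpa [add_right_comm] using budget_window l hb
  · simp [lift4_union, cnt_win]

/-! ### Windows that spend a spare point -/

/-- Three isolated points `a₁, a₂, a₃`, a point `b₁` over `D`, and a point `b₂` over `E`. -/
abbrev win2 {α : Type} (t : TopologicalSpace α) (D : Set (Option (Option (Option α))))
    (E : Set (Win α)) : TopologicalSpace (Option (Win α)) :=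
  extT (extT (extT (extT (extT t ∅) ∅) ∅) D) E

lemma card_win2 {α : Type} [Finite α] : Nat.card (Option (Win α)) = Nat.card α + 5 := by
  simp [Win, Finite.card_option]

lemma empty_eq_lift5 {α : Type} :
    (∅ : Set (Option (Win α))) = lift (lift4 ∅ false false false false) false := by
  simp [lift4, ← empty_eq_lift]

lemma HState.window {k l : ℕ} (h : HState k) (hl : l = 1 ∨ l = 3 ∨ l = 5 ∨ l = 7) :
    TState (8 * k + l) := by
  obtain ⟨α, _, t, hk, hb⟩ := h
  have hb' : 2 ^ (3 * (Nat.card α + 5 + 1)) ≤ 64 * (8 * k + l) ^ 4 := budget_window l hb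
  rcases hl with rfl | rfl | rfl | rfl
  · exact tState_win t univ hk (cnt_univ t)
      ((Nat.pow_le_pow_right (by norm_num) (by omega)).trans hb)
  -- `3 = 2 + 1`, with `b₁` over `a₁, a₂` and `b₂` over everything
  · refine ⟨_, inferInstance, win2 t (lift (lift (lift univ true) true) false)
      (lift4 univ true true true true), ?_, by rwa [card_win2],
      lift (lift4 univ true true true false) false,
      lift (lift4 univ true true false false) false,
      lift (lift4 univ true true true true) false, ?_⟩
    · rw [empty_eq_lift5, ← hk]
      simp [lift4, cnt_lift_true, cnt_lift_false]; ring
    · simp [lift4, cnt_lift_true, cnt_lift_false]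
  -- `5 = 4 + 1`, with `b₁` over `a₁` and `b₂` over everything
  · refine ⟨_, inferInstance, win2 t (lift (lift (lift univ true) false) false)
      (lift4 univ true true true true), ?_, by rwa [card_win2],
      lift (lift4 univ true true true false) false,
      lift (lift4 univ true true false false) false,
      lift (lift4 univ true true true true) false, ?_⟩
    · rw [empty_eq_lift5, ← hk]
      simp [lift4, cnt_lift_true, cnt_lift_false]; ring
    · simp [lift4, cnt_lift_true, cnt_lift_false]
  -- `7 = 4 + 2 + 1`, with `b₁` over `a₁` and `b₂` over `a₂, a₃`
  · refine ⟨_, inferInstance, win2 t (lift (lift (lift univ true) false) false)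
      (lift4 univ false true true false), ?_, by rwa [card_win2],
      lift (lift4 univ false true true false) true,
      lift (lift4 univ true false false true) false,
      lift (lift4 univ true true true false) true, ?_⟩
    · rw [empty_eq_lift5, ← hk]
      simp [lift4, cnt_lift_true, cnt_lift_false]; ring
    · simp [lift4, cnt_lift_true, cnt_lift_false]

lemma TState.window {k l : ℕ} (h : TState k) (hl : l = 1 ∨ l = 3 ∨ l = 5) :
    TState (8 * k + l) := by
  obtain ⟨α, _, t, hk, hb, D3, D5, M, h3, h5, hM⟩ := h
  rcases hl with rfl | rfl | rfl
  · exact tState_win t univ hk (cnt_univ t) hb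
  · exact tState_win t D3 hk h3 hb
  · exact tState_win t D5 hk h5 hb

/-- Here `7 = 2 * 3 + 1`, with `b₁` over `D₃, a₁, a₂` and `b₂` over everything. -/
lemma TState.window_seven {k : ℕ} (h : TState k) : GState (8 * k + 7) := by
  obtain ⟨α, _, t, hk, hb, D3, D5, M, h3, h5, hM⟩ := h
  have hb' : 2 ^ (3 * (Nat.card α + 5)) ≤ 64 * (8 * k + 7) ^ 4 := budget_window 7 hb
  refine ⟨_, inferInstance, win2 t (lift (lift (lift D3 true) true) false)
    (lift4 univ true true true true), ?_, by rwa [card_win2], ?_, ?_, ?_, ?_⟩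
  · rw [empty_eq_lift5, ← hk]
    simp [lift4, cnt_lift_true, cnt_lift_false, h3]; ring
  · refine avail_one (M := lift (lift4 univ true true true true) false)
      (D := lift (lift4 univ true true true false) false) ?_ ?_ <;>
    simp [lift4, cnt_lift_true, cnt_lift_false]
  · refine ⟨lift (lift4 univ true true true false) false, ?_,
      ⟨lift (lift4 univ true true false true) false, .inl ?_⟩,
      ⟨lift (lift4 univ true false true false) false, .inl ?_⟩⟩ <;>
    simp [lift4, cnt_lift_true, cnt_lift_false]
  · refine ⟨lift (lift4 univ true true false false) false, ?_,
      ⟨lift (lift4 M true true true true) false, .inl ?_⟩,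
      ⟨lift (lift4 univ true false true false) false, .inl ?_⟩⟩ <;>
    simp [lift4, cnt_lift_true, cnt_lift_false, hM]
  · refine ⟨lift (lift4 univ true false false false) false, ?_,
      ⟨lift (lift4 M true true true true) false, .inl ?_⟩,
      ⟨lift (lift4 univ false true true false) false, .inl ?_⟩⟩ <;>
    simp [lift4, cnt_lift_true, cnt_lift_false, hM]

/-! ### Every number of open sets is attained within the budget -/

lemma cnt_empty_type (D : Set Empty) : cnt (⊥ : TopologicalSpace Empty) D = 1 := by
  rw [Set.eq_empty_of_isEmpty D, ← Set.univ_eq_empty_iff.2 inferInstance, cnt_univ]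

lemma hState_one : HState 1 :=
  ⟨Empty, inferInstance, ⊥, cnt_empty_type _, by simp⟩

/-- A chain of two points. -/
lemma hState_three : HState 3 := by
  refine ⟨Option (Option Empty), inferInstance, extT (extT ⊥ ∅) univ, ?_, ?_⟩
  · simp [empty_eq_lift, cnt_lift_false, cnt_empty_type]
  · simp

/-- Two incomparable points below a third one. -/
lemma hState_five : HState 5 := by
  refine ⟨Option (Option (Option Empty)), inferInstance, extT (extT (extT ⊥ ∅) ∅) univ, ?_, ?_⟩
  · simp [empty_eq_lift, cnt_lift_false, cnt_empty_type]
  · simp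

/-- A chain of two points and an isolated point, all below a fourth one. -/
lemma tState_seven : TState 7 := by
  refine ⟨Option (Option (Option (Option Empty))), inferInstance,
    extT (extT (extT (extT ⊥ ∅) univ) ∅) univ, ?_, ?_,
    lift (lift (lift (lift ∅ true) true) false) false,
    lift (lift (lift (lift ∅ true) false) false) false,
    lift (lift (lift (lift ∅ true) true) true) false, ?_⟩
  · simp [empty_eq_lift, cnt_lift_false, cnt_empty_type]
  · simp
  · simp [cnt_lift_false, cnt_lift_true, cnt_empty_type, univ_eq_lift]

lemma exists_state (k : ℕ) (hk : 1 ≤ k) : HState k ∨ TState k ∨ GState k := by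
  induction k using Nat.strong_induction_on with
  | _ k ih =>
  obtain ⟨j, rfl | rfl⟩ := Nat.even_or_odd' k
  · rcases ih j (by omega) (by omega) with h | h | h
    · exact .inl h.double
    · exact .inr (.inl h.double)
    · exact .inr (.inr h.double)
  · by_cases h8 : 2 * j + 1 < 8
    · have : j = 0 ∨ j = 1 ∨ j = 2 ∨ j = 3 := by omega
      rcases this with rfl | rfl | rfl | rfl
      · exact .inl hState_one
      · exact .inl hState_three
      · exact .inl hState_five
      · exact .inr (.inl tState_seven)
    · obtain ⟨i, l, hl, hj⟩ : ∃ i l, (l = 1 ∨ l = 3 ∨ l = 5 ∨ l = 7) ∧ 2 * j + 1 = 8 * i + l :=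
        ⟨(2 * j + 1) / 8, (2 * j + 1) % 8, by omega, by omega⟩
      rw [hj]
      rcases ih i (by omega) (by omega) with h | h | h
      · exact .inr (.inl (h.window hl))
      · rcases hl with hl | hl | hl | rfl
        · exact .inr (.inl (h.window (by omega)))
        · exact .inr (.inl (h.window (by omega)))
        · exact .inr (.inl (h.window (by omega)))
        · exact .inr (.inr h.window_seven)
      · exact .inr (.inr (h.window hl))

lemma exists_space (k : ℕ) (hk : 1 ≤ k) :
    ∃ (α : Type) (_ : Finite α) (t : TopologicalSpace α),
      Nat.card {s : Set α // IsOpen[t] s} = k ∧ 2 ^ (3 * Nat.card α) ≤ 64 * k ^ 4 := by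
  have key : ∀ {α : Type} (t : TopologicalSpace α), cnt t ∅ = Nat.card {s : Set α // IsOpen[t] s} :=
    fun t => by simp [cnt]
  rcases exists_state k hk with h | h | h
  · obtain ⟨α, i, t, h1, h2⟩ := h
    exact ⟨α, i, t, key t ▸ h1, (Nat.pow_le_pow_right (by norm_num) (by omega)).trans h2⟩
  · obtain ⟨α, i, t, h1, h2, _⟩ := h
    exact ⟨α, i, t, key t ▸ h1, (Nat.pow_le_pow_right (by norm_num) (by omega)).trans h2⟩
  · obtain ⟨α, i, t, h1, h2, _⟩ := h
    exact ⟨α, i, t, key t ▸ h1, h2⟩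

/-! ### Blowing up a small dense set -/

/-- In a dense set `A` of minimal cardinality each point `a` has an open set `U a` meeting `A`
only in `a`, so the unions of the `U a` over subsets of `A` are pairwise distinct. -/
lemma exists_dense {α : Type} [Finite α] (t : TopologicalSpace α) :
    ∃ A : Finset α, (∀ s, IsOpen[t] s → s.Nonempty → ∃ a ∈ A, a ∈ s) ∧
      2 ^ A.card ≤ Nat.card {s : Set α // IsOpen[t] s} := by
  classical
  have := Fintype.ofFinite α
  let P : Finset α → Prop := fun A => ∀ s, IsOpen[t] s → s.Nonempty → ∃ a ∈ A, a ∈ s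
  obtain ⟨A, hA, hmin⟩ := Set.exists_min_image {A | P A} Finset.card (Set.toFinite _)
    ⟨Finset.univ, fun s _ ⟨x, hx⟩ => ⟨x, Finset.mem_univ x, hx⟩⟩
  refine ⟨A, hA, ?_⟩
  have hU : ∀ a ∈ A, ∃ s, IsOpen[t] s ∧ a ∈ s ∧ ∀ b ∈ A, b ∈ s → b = a := by
    intro a ha
    have : ¬ P (A.erase a) := fun h => by
      have := hmin _ h
      have := Finset.card_erase_lt_of_mem ha
      omega
    simp only [P] at this
    push Not at this
    obtain ⟨s, hs, hne, h⟩ := this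
    have h' : ∀ b ∈ A, b ∈ s → b = a := fun b hb hbs => by
      by_contra hba
      exact h b (Finset.mem_erase.2 ⟨hba, hb⟩) hbs
    obtain ⟨b, hb, hbs⟩ := hA s hs hne
    exact ⟨s, hs, h' b hb hbs ▸ hbs, h'⟩
  choose! U hUo hUm hUu using hU
  rw [← Finset.card_powerset, ← Fintype.card_coe, ← Nat.card_eq_fintype_card]
  refine Nat.card_le_card_of_injective (fun B : A.powerset =>
    (⟨⋃ a ∈ B.1, U a, isOpen_biUnion fun a ha => hUo a (Finset.mem_powerset.1 B.2 ha)⟩ :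
      {s : Set α // IsOpen[t] s})) ?_
  have hmem : ∀ B ⊆ A, ∀ a ∈ A, a ∈ ⋃ b ∈ B, U b ↔ a ∈ B := by
    intro B hB a ha
    simp only [mem_iUnion, exists_prop]
    constructor
    · rintro ⟨b, hb, hab⟩
      rwa [hUu b (hB hb) a ha hab]
    · exact fun h => ⟨a, h, hUm a ha⟩
  rintro ⟨B, hB⟩ ⟨C, hC⟩ h
  rw [Finset.mem_powerset] at hB hC
  have h' : ⋃ a ∈ B, U a = ⋃ a ∈ C, U a := congrArg Subtype.val h
  refine Subtype.ext (Finset.ext fun a => ⟨fun ha => ?_, fun ha => ?_⟩)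
  · rw [← hmem C hC a (hB ha), ← h']
    exact (hmem B hB a (hB ha)).2 ha
  · rw [← hmem B hB a (hC ha), h']
    exact (hmem C hC a (hC ha)).2 ha

/-- A surjection from `Fin n` whose fibres over `A` have at least `m` elements. -/
lemma exists_blowup {α : Type} [Finite α] [Nonempty α] (A : Finset α) {m n : ℕ} (hm : 1 ≤ m)
    (hn : Nat.card α + (m - 1) * A.card ≤ n) :
    ∃ f : Fin n → α, Function.Surjective f ∧ ∀ a ∈ A, m ≤ Nat.card (f ⁻¹' {a}) := by
  classical
  have := Fintype.ofFinite α
  let w : α → ℕ := fun x => if x ∈ A then m else 1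
  have hw : ∀ x, 0 < w x := fun x => by simp only [w]; split_ifs <;> omega
  have hcard : Fintype.card (Σ x, Fin (w x)) ≤ Fintype.card (Fin n) := by
    have h1 : ∀ x, w x = 1 + if x ∈ A then m - 1 else 0 := fun x => by
      simp only [w]; split_ifs <;> omega
    rw [Fintype.card_sigma, Fintype.card_fin]
    simp only [Fintype.card_fin, h1, Finset.sum_add_distrib, Finset.sum_ite_mem]
    rw [Nat.card_eq_fintype_card] at hn
    simpa [mul_comm] using hn
  obtain ⟨e⟩ := Function.Embedding.nonempty_of_card_le hcard
  have : Nonempty (Σ x, Fin (w x)) := ⟨⟨Classical.arbitrary α, ⟨0, hw _⟩⟩⟩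
  let g := Function.invFun e
  have hg : ∀ y, g (e y) = y := Function.leftInverse_invFun e.injective
  refine ⟨fun i => (g i).1, fun x => ⟨e ⟨x, ⟨0, hw x⟩⟩, by simp [hg]⟩, fun a ha => ?_⟩
  have hwa : w a = m := by simp [w, ha]
  calc m = Nat.card (Fin (w a)) := by simp [hwa]
    _ ≤ _ := Nat.card_le_card_of_injective
      (fun j : Fin (w a) => (⟨e ⟨a, j⟩, by simp [hg]⟩ : (fun i => (g i).1) ⁻¹' {a})) (by
        intro i j h
        have := e.injective (congrArg Subtype.val h)
        simpa using this)


/-- For `m ≥ 1`, `n ≥ max m 2` and `2 ≤ k` with `k ^ (3 m + 1) ≤ 2 ^ (3 (n - 2))`,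
there is a topology on `n` points with exactly `k` open sets in which the minimal
open set of every point has at least `m` elements. -/
theorem T_min_sets_pos (m n k : ℕ) (hm : 1 ≤ m) (hn : max m 2 ≤ n) (hk : 2 ≤ k)
    (hkn : k ^ (3 * m + 1) ≤ 2 ^ (3 * (n - 2))) :
    ∃ t : TopologicalSpace (Fin n),
      Nat.card {s : Set (Fin n) // t.IsOpen s} = k ∧
        ∀ x : Fin n,
          m ≤ Nat.card (⋂₀ {U : Set (Fin n) | t.IsOpen U ∧ x ∈ U} : Set (Fin n)) := by
  obtain ⟨α, _, t, hcard, hb⟩ := exists_space k (by omega)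
  obtain ⟨A, hA, hAk⟩ := exists_dense t
  rw [hcard] at hAk
  have hne : Nonempty α := by
    by_contra h
    rw [not_nonempty_iff] at h
    have : Nat.card {s : Set α // IsOpen[t] s} ≤ 1 := Finite.card_le_one_iff_subsingleton.2
      inferInstance
    omega
  have hN : Nat.card α + (m - 1) * A.card ≤ n := by
    obtain ⟨m, rfl⟩ := Nat.exists_eq_add_of_le' hm
    have h1 : 2 ^ (3 * Nat.card α + 3 * (m * A.card)) ≤ 2 ^ (3 * n) := by
      calc 2 ^ (3 * Nat.card α + 3 * (m * A.card))
          = 2 ^ (3 * Nat.card α) * (2 ^ A.card) ^ (3 * m) := by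
            rw [← pow_mul, ← pow_add]; ring_nf
        _ ≤ (64 * k ^ 4) * k ^ (3 * m) := by gcongr
        _ = 2 ^ 6 * k ^ (3 * (m + 1) + 1) := by ring
        _ ≤ 2 ^ 6 * 2 ^ (3 * (n - 2)) := by gcongr
        _ = 2 ^ (3 * n) := by
            rw [← pow_add]
            congr 1
            have := (le_max_right _ _).trans hn
            omega
    have h2 := (Nat.pow_le_pow_iff_right (by norm_num)).1 h1
    simp only [Nat.add_sub_cancel]
    omega
  obtain ⟨f, hf, hfib⟩ := exists_blowup A hm hN
  refine ⟨t.induced f, ?_, fun x => ?_⟩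
  · rw [← hcard]
    refine (Nat.card_congr (Equiv.ofBijective
      (fun s : {s : Set α // IsOpen[t] s} =>
        (⟨f ⁻¹' s.1, s.1, s.2, rfl⟩ :
          {s : Set (Fin n) // (t.induced f).IsOpen s})) ⟨?_, ?_⟩)).symm
    · intro s u h
      exact Subtype.ext (hf.preimage_injective (congrArg Subtype.val h))
    · rintro ⟨_, s, hs, rfl⟩
      exact ⟨⟨s, hs⟩, rfl⟩
  · have hopen : IsOpen[t.induced f]
        (⋂₀ {U : Set (Fin n) | (t.induced f).IsOpen U ∧ x ∈ U}) :=
      @Set.Finite.isOpen_sInter _ (t.induced f) _ (Set.toFinite _) fun U hU => hU.1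
    have hx : x ∈ ⋂₀ {U : Set (Fin n) | (t.induced f).IsOpen U ∧ x ∈ U} :=
      fun U hU => hU.2
    obtain ⟨V, hV, hVe⟩ := hopen
    rw [← hVe] at hx ⊢
    obtain ⟨a, ha, haV⟩ := hA V hV ⟨f x, hx⟩
    exact (hfib a ha).trans (Nat.card_mono (Set.toFinite _)
      (preimage_mono (singleton_subset_iff.2 haV)))
end
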